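/- The set Π^(3)_{▽,∞} = {π_▽(ℱ) : ℱ a family of 3-graphs} is not well-ordered by ≤; that is, there exists an infinite strictly decreasing sequence of real numbers each of which equals π_▽(ℱ) for some family ℱ of 3-graphs. -/

import Mathlib

/-!
The densities come from palettes.  A palette `P` is a ternary relation on a finite colour set; a
3-graph satisfies `P` if its vertices can be ordered and its pairs coloured so that the colours of
`uv`, `vw`, `uw` are related by `P` for every edge `u < v < w`.  Let `family P` consist of all
3-graphs that do not satisfy `P`.  Satisfying `P` is inherited by subhypergraphs, so a 3-graph is
free of `family P` exactly when it satisfies `P` (`free_iff`).  Then `π_▽(family P)` is the maximum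
over the simplex of the palette polynomial `∑ x_a x_b x_c`, the sum being over the triples of `P`;
`piVVV_bounds` proves the two inequalities that are needed.

* Upper bound (`dens_le_of_sat`).  Take `t` long consecutive intervals of the ordered vertex set.
  By energy increment they contain large subsets that are pairwise regular in every colour
  (`regular_tuple`), and by Ramsey's theorem three of these subsets have nearly the same colour
  densities `x_a` on all three pairs (`ramsey`).  By the counting lemma (`count`) the density of
  edges across this triple is at most the palette polynomial at `x`, up to a small error.
* Lower bound (`exists_dense`).  Colour the pairs of `range N` uniformly at random, with colours
  repeated in proportion to prescribed integer weights, and take as edges all triples that `P`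
  permits.  A second-moment count of 4-cycles shows that some colouring is quasirandom in every
  colour (`exists_colouring`), and the counting lemma gives the density on all triples of vertex
  sets.

The chain palettes have a colour `none` of weight `y`, and `m + 1` levels of two colours each with
level weights `X_i` and imbalances `D_i`; put `S = ∑ X_i`, so `y = 1 - S`.  Triples contain `none`
exactly once, and the number of admissible positions of `none` is chosen (`mult`) so that the
palette polynomial is `y * q` with (`quad_eq`)

  `q = 5/2 S² - 1/4 ∑ (X_{i+1} - 2 X_i)² + 1/4 X_0² - 1/4 ∑ (5 - 2 d_i) D_i²`,

where the `d_i ≤ 2` are the diagonal multiplicities.  The maximum of `5/2 (1 - S) S²` is `10/27`.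
Doubling the weight from each level to the next, with `D = 0`, kills the negative terms and leaves
`X_0² > 0`, so the density exceeds `10/27` strictly (`chain_lower`).  Conversely, the remainder is
positive only if `X_0` is at most the average level weight, since otherwise some step deviates from
doubling by at least `X_0`; so the density is at most `10/27 + 1 / (4 (m + 1)²)` (`chain_upper`).
Hence infinitely many densities accumulate at `10/27` from above without attaining it, and a strictly
decreasing sequence can be selected.
-/

open Finset

/-- A 3-uniform hypergraph: a finite vertex set (of naturals) together with a set of
3-element subsets of it as edges. -/
structure ThreeGraph where
  verts : Finset ℕ
  edges : Finset (Finset ℕ)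
  edge_sub : ∀ e ∈ edges, e ⊆ verts
  edge_card : ∀ e ∈ edges, e.card = 3

/-- `F` occurs as a subhypergraph of `H`. -/
def IsSubhypergraph (F H : ThreeGraph) : Prop :=
  ∃ f : ℕ → ℕ, Set.InjOn f ↑F.verts ∧ (∀ v ∈ F.verts, f v ∈ H.verts) ∧
    ∀ e ∈ F.edges, e.image f ∈ H.edges

noncomputable section

/-- Number of triples `(x,y,z) ∈ X × Y × Z` with `{x,y,z}` an edge of `H`. -/
def eVVV (H : ThreeGraph) (X Y Z : Finset ℕ) : ℕ :=
  ((X ×ˢ Y ×ˢ Z).filter fun p => ({p.1, p.2.1, p.2.2} : Finset ℕ) ∈ H.edges).card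

/-- `H` is `(d,η,▽)`-dense. -/
def IsDenseVVV (H : ThreeGraph) (d η : ℝ) : Prop :=
  ∀ X Y Z : Finset ℕ, X ⊆ H.verts → Y ⊆ H.verts → Z ⊆ H.verts →
    (eVVV H X Y Z : ℝ) ≥ d * X.card * Y.card * Z.card - η * (H.verts.card : ℝ) ^ 3

/-- Number of ordered triples `(x,y,z)` with `x ∈ X`, `{y,z} ∈ P` and `{x,y,z}` an edge. -/
def eEV (H : ThreeGraph) (X : Finset ℕ) (P : Finset (Finset ℕ)) : ℕ :=
  ((X ×ˢ H.verts ×ˢ H.verts).filter fun p =>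
    ({p.2.1, p.2.2} : Finset ℕ) ∈ P ∧ ({p.1, p.2.1, p.2.2} : Finset ℕ) ∈ H.edges).card

/-- `H` is `(d,η,e↦v)`-dense. -/
def IsDenseEV (H : ThreeGraph) (d η : ℝ) : Prop :=
  ∀ (X : Finset ℕ) (P : Finset (Finset ℕ)), X ⊆ H.verts →
    (∀ p ∈ P, p ⊆ H.verts ∧ p.card = 2) →
    (eEV H X P : ℝ) ≥ d * X.card * P.card - η * (H.verts.card : ℝ) ^ 3

/-- `K_{ee}(P,Q)`: ordered triples `(x,y,z)` with `{x,y} ∈ P` and `{y,z} ∈ Q`. -/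
def KEE (H : ThreeGraph) (P Q : Finset (Finset ℕ)) : Finset (ℕ × ℕ × ℕ) :=
  (H.verts ×ˢ H.verts ×ˢ H.verts).filter fun p =>
    ({p.1, p.2.1} : Finset ℕ) ∈ P ∧ ({p.2.1, p.2.2} : Finset ℕ) ∈ Q

/-- Number of triples in `K_{ee}(P,Q)` forming an edge of `H`. -/
def eEE (H : ThreeGraph) (P Q : Finset (Finset ℕ)) : ℕ :=
  ((KEE H P Q).filter fun p => ({p.1, p.2.1, p.2.2} : Finset ℕ) ∈ H.edges).card

/-- `H` is `(d,η,ee)`-dense. -/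
def IsDenseEE (H : ThreeGraph) (d η : ℝ) : Prop :=
  ∀ P Q : Finset (Finset ℕ),
    (∀ p ∈ P, p ⊆ H.verts ∧ p.card = 2) → (∀ q ∈ Q, q ⊆ H.verts ∧ q.card = 2) →
    (eEE H P Q : ℝ) ≥ d * (KEE H P Q).card - η * (H.verts.card : ℝ) ^ 3

/-- The uniform Turán density `π_▽(𝓕)` of a family `𝓕` of 3-graphs. -/
def piVVV (𝓕 : Set ThreeGraph) : ℝ :=
  sSup {d : ℝ | 0 ≤ d ∧ d ≤ 1 ∧ ∀ η : ℝ, 0 < η → ∀ n : ℕ,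
    ∃ H : ThreeGraph, n ≤ H.verts.card ∧ (∀ F ∈ 𝓕, ¬ IsSubhypergraph F H) ∧
      IsDenseVVV H d η}

/-- The uniform Turán density `π_{e↦v}(𝓕)` of a family `𝓕` of 3-graphs. -/
def piEV (𝓕 : Set ThreeGraph) : ℝ :=
  sSup {d : ℝ | 0 ≤ d ∧ d ≤ 1 ∧ ∀ η : ℝ, 0 < η → ∀ n : ℕ,
    ∃ H : ThreeGraph, n ≤ H.verts.card ∧ (∀ F ∈ 𝓕, ¬ IsSubhypergraph F H) ∧
      IsDenseEV H d η}

/-- The uniform Turán density `π_{ee}(𝓕)` of a family `𝓕` of 3-graphs. -/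
def piEE (𝓕 : Set ThreeGraph) : ℝ :=
  sSup {d : ℝ | 0 ≤ d ∧ d ≤ 1 ∧ ∀ η : ℝ, 0 < η → ∀ n : ℕ,
    ∃ H : ThreeGraph, n ≤ H.verts.card ∧ (∀ F ∈ 𝓕, ¬ IsSubhypergraph F H) ∧
      IsDenseEE H d η}

/-- A palette: a finite set of ordered triples of natural numbers (colours). -/
abbrev Palette := Finset (ℕ × ℕ × ℕ)

/-- The set of colours `Φ(𝒫)` of a palette. -/
def palColours (P : Palette) : Finset ℕ :=
  P.image (·.1) ∪ P.image (·.2.1) ∪ P.image (·.2.2)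

/-- A weighting of a palette: nonnegative weights on the colours summing to 1. -/
def IsWeighting (P : Palette) (x : ℕ → ℝ) : Prop :=
  (∀ a ∈ palColours P, 0 ≤ x a) ∧ ∑ a ∈ palColours P, x a = 1

/-- `λ^▽_𝒫(x) = Σ_{(a,b,c) ∈ 𝒫} x_a x_b x_c`. -/
def lamVVV (P : Palette) (x : ℕ → ℝ) : ℝ :=
  ∑ p ∈ P, x p.1 * x p.2.1 * x p.2.2

/-- The palette Lagrangian `Λ^▽_𝒫`. -/
def LambdaVVV (P : Palette) : ℝ :=
  sSup {l : ℝ | ∃ x : ℕ → ℝ, IsWeighting P x ∧ l = lamVVV P x}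

/-- The ordered degree Lagrangian `λ^a_𝒫(x)`. -/
def lamDeg (P : Palette) (a : ℕ) (x : ℕ → ℝ) : ℝ :=
  min (min (∑ p ∈ P.filter (fun p => p.1 = a), x p.2.1 * x p.2.2)
           (∑ p ∈ P.filter (fun p => p.2.1 = a), x p.1 * x p.2.2))
      (∑ p ∈ P.filter (fun p => p.2.2 = a), x p.1 * x p.2.1)

/-- `λ^{e↦v}_𝒫(x)`: minimum of `λ^a_𝒫(x)` over colours `a` with positive weight. -/
def lamEV (P : Palette) (x : ℕ → ℝ) : ℝ :=
  sInf {l : ℝ | ∃ a ∈ palColours P, 0 < x a ∧ l = lamDeg P a x}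

/-- The palette Lagrangian `Λ^{e↦v}_𝒫`. -/
def LambdaEV (P : Palette) : ℝ :=
  sSup {l : ℝ | ∃ x : ℕ → ℝ, IsWeighting P x ∧ l = lamEV P x}

/-- The ordered codegree Lagrangian `λ^{a,b}_𝒫(x)`. -/
def lamCodeg (P : Palette) (a b : ℕ) (x : ℕ → ℝ) : ℝ :=
  min (min (min (∑ p ∈ P.filter (fun p => p.1 = a ∧ p.2.1 = b), x p.2.2)
                (∑ p ∈ P.filter (fun p => p.1 = b ∧ p.2.1 = a), x p.2.2))
           (min (∑ p ∈ P.filter (fun p => p.1 = a ∧ p.2.2 = b), x p.2.1)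
                (∑ p ∈ P.filter (fun p => p.1 = b ∧ p.2.2 = a), x p.2.1)))
      (min (∑ p ∈ P.filter (fun p => p.2.1 = a ∧ p.2.2 = b), x p.1)
           (∑ p ∈ P.filter (fun p => p.2.1 = b ∧ p.2.2 = a), x p.1))

/-- `λ^{ee}_𝒫(x)`: minimum of `λ^{a,b}_𝒫(x)` over colours `a,b` with positive weight. -/
def lamEE (P : Palette) (x : ℕ → ℝ) : ℝ :=
  sInf {l : ℝ | ∃ a ∈ palColours P, ∃ b ∈ palColours P, 0 < x a * x b ∧ l = lamCodeg P a b x}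

/-- The palette Lagrangian `Λ^{ee}_𝒫`. -/
def LambdaEE (P : Palette) : ℝ :=
  sSup {l : ℝ | ∃ x : ℕ → ℝ, IsWeighting P x ∧ l = lamEE P x}

/-- A 3-graph `H` satisfies a palette `P`: there is an ordering of the vertices (an
injection `ord` into `ℕ`) and a colouring `φ` of the pairs of vertices with colours in
`Φ(P)` such that the ordered shadow of every edge is a triple of the palette. -/
def Satisfies (H : ThreeGraph) (P : Palette) : Prop :=
  ∃ (ord : ℕ → ℕ) (φ : Finset ℕ → ℕ),
    Set.InjOn ord ↑H.verts ∧
    (∀ u ∈ H.verts, ∀ v ∈ H.verts, u ≠ v → φ {u, v} ∈ palColours P) ∧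
    ∀ u v w : ℕ, ({u, v, w} : Finset ℕ) ∈ H.edges →
      ord u < ord v → ord v < ord w →
      (φ {u, v}, φ {v, w}, φ {u, w}) ∈ P

/-- Delete a set of edges from a 3-graph. -/
def ThreeGraph.deleteEdges (H : ThreeGraph) (R : Finset (Finset ℕ)) : ThreeGraph where
  verts := H.verts
  edges := H.edges \ R
  edge_sub := fun e he => H.edge_sub e (Finset.mem_sdiff.mp he).1
  edge_card := fun e he => H.edge_card e (Finset.mem_sdiff.mp he).1

/-- `H` α-almost satisfies `P`: one can remove at most `α·|V(H)|³` edges so that the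
resulting 3-graph satisfies `P`. -/
def AlmostSatisfies (H : ThreeGraph) (P : Palette) (α : ℝ) : Prop :=
  ∃ R ⊆ H.edges, (R.card : ℝ) ≤ α * (H.verts.card : ℝ) ^ 3 ∧
    Satisfies (H.deleteEdges R) P

/-- The Lagrange polynomial `λ_F(x) = 3! Σ_{e ∈ E(F)} Π_{v ∈ e} x_v` of a 3-graph. -/
def lagrangePoly (F : ThreeGraph) (x : ℕ → ℝ) : ℝ :=
  6 * ∑ e ∈ F.edges, ∏ v ∈ e, x v

/-- The Lagrangian `Λ_F` of a 3-graph: the supremum of the Lagrange polynomial over the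
standard simplex on the vertices. -/
def lagrangian (F : ThreeGraph) : ℝ :=
  sSup {l : ℝ | ∃ x : ℕ → ℝ, (∀ v ∈ F.verts, 0 ≤ x v ∧ x v ≤ 1) ∧
    (∑ v ∈ F.verts, x v = 1) ∧ l = lagrangePoly F x}

end

namespace UniformTuran

open scoped Classical

/-! ### Counting triangles in regular triples -/

/-- The real-valued indicator of a proposition. -/
noncomputable def ind (p : Prop) : ℝ := if p then 1 else 0

lemma ind_nonneg (p : Prop) : 0 ≤ ind p := by unfold ind; split_ifs <;> norm_num

lemma ind_le_one (p : Prop) : ind p ≤ 1 := by unfold ind; split_ifs <;> norm_num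

lemma ind_of {p : Prop} (h : p) : ind p = 1 := if_pos h

lemma ind_not {p : Prop} (h : ¬ p) : ind p = 0 := if_neg h

lemma ind_and (p q : Prop) : ind (p ∧ q) = ind p * ind q := by
  unfold ind; by_cases hp : p <;> by_cases hq : q <;> simp [hp, hq]

lemma cut_ind {α β : Type*} (A : Finset α) (B : Finset β) (D : α → β → ℝ) (e : ℝ)
    (h : ∀ S ⊆ A, ∀ T ⊆ B, |∑ u ∈ S, ∑ v ∈ T, D u v| ≤ e) (p : α → Prop) (q : β → Prop) :
    |∑ u ∈ A, ∑ v ∈ B, D u v * (ind (p u) * ind (q v))| ≤ e := by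
  have := h (A.filter p) (filter_subset _ _) (B.filter q) (filter_subset _ _)
  convert this using 2
  rw [sum_filter]
  refine sum_congr rfl fun u _ => ?_
  rw [sum_filter]
  by_cases hp : p u
  · simp only [hp, if_true]
    refine sum_congr rfl fun v _ => ?_
    by_cases hq : q v <;> simp [ind, hq]
  · simp [ind, hp]

/-- Counting lemma.  If three bipartite relations `F, G, K` on `A × B`, `B × C`, `A × C` are
within `e₁, e₂, e₃` in cut norm of multiples `a E₁, b E₂, c E₃` of other relations, then the number
of triangles of the former is controlled by the number of triangles of the latter. -/
lemma count {α β γ : Type*} (A : Finset α) (B : Finset β) (C : Finset γ)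
    (F E₁ : α → β → Prop) (G E₂ : β → γ → Prop) (K E₃ : α → γ → Prop) (a b c e₁ e₂ e₃ : ℝ)
    (ha : 0 ≤ a) (ha1 : a ≤ 1) (hb : 0 ≤ b) (hb1 : b ≤ 1)
    (hF : ∀ S ⊆ A, ∀ T ⊆ B, |∑ u ∈ S, ∑ v ∈ T, (ind (F u v) - a * ind (E₁ u v))| ≤ e₁)
    (hG : ∀ S ⊆ B, ∀ T ⊆ C, |∑ u ∈ S, ∑ v ∈ T, (ind (G u v) - b * ind (E₂ u v))| ≤ e₂)
    (hK : ∀ S ⊆ A, ∀ T ⊆ C, |∑ u ∈ S, ∑ v ∈ T, (ind (K u v) - c * ind (E₃ u v))| ≤ e₃) :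
    |∑ u ∈ A, ∑ v ∈ B, ∑ w ∈ C, (ind (F u v) * ind (G v w) * ind (K u w)
        - a * b * c * (ind (E₁ u v) * ind (E₂ v w) * ind (E₃ u w)))|
      ≤ e₁ * #C + e₂ * #A + e₃ * #B := by
  have h1 : |∑ w ∈ C, ∑ u ∈ A, ∑ v ∈ B,
      (ind (F u v) - a * ind (E₁ u v)) * (ind (K u w) * ind (G v w))| ≤ e₁ * #C := by
    refine (abs_sum_le_sum_abs _ _).trans ?_
    rw [mul_comm e₁, ← nsmul_eq_mul]
    exact sum_le_card_nsmul _ _ _ fun w _ =>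
      cut_ind A B _ e₁ hF (fun u => K u w) (fun v => G v w)
  have h2 : |∑ u ∈ A, a * ∑ v ∈ B, ∑ w ∈ C,
      (ind (G v w) - b * ind (E₂ v w)) * (ind (E₁ u v) * ind (K u w))| ≤ e₂ * #A := by
    refine (abs_sum_le_sum_abs _ _).trans ?_
    rw [mul_comm e₂, ← nsmul_eq_mul]
    refine sum_le_card_nsmul _ _ _ fun u _ => ?_
    rw [abs_mul, abs_of_nonneg ha]
    have := cut_ind B C _ e₂ hG (fun v => E₁ u v) (fun w => K u w)
    calc _ ≤ 1 * e₂ := mul_le_mul ha1 this (abs_nonneg _) zero_le_one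
      _ = e₂ := one_mul e₂
  have h3 : |∑ v ∈ B, (a * b) * ∑ u ∈ A, ∑ w ∈ C,
      (ind (K u w) - c * ind (E₃ u w)) * (ind (E₁ u v) * ind (E₂ v w))| ≤ e₃ * #B := by
    refine (abs_sum_le_sum_abs _ _).trans ?_
    rw [mul_comm e₃, ← nsmul_eq_mul]
    refine sum_le_card_nsmul _ _ _ fun v _ => ?_
    rw [abs_mul, abs_of_nonneg (mul_nonneg ha hb)]
    have := cut_ind A C _ e₃ hK (fun u => E₁ u v) (fun w => E₂ v w)
    calc _ ≤ 1 * e₃ := mul_le_mul (mul_le_one₀ ha1 hb hb1) this (abs_nonneg _) zero_le_one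
      _ = e₃ := one_mul e₃
  have key : ∑ u ∈ A, ∑ v ∈ B, ∑ w ∈ C, (ind (F u v) * ind (G v w) * ind (K u w)
        - a * b * c * (ind (E₁ u v) * ind (E₂ v w) * ind (E₃ u w))) =
      (∑ w ∈ C, ∑ u ∈ A, ∑ v ∈ B,
        (ind (F u v) - a * ind (E₁ u v)) * (ind (K u w) * ind (G v w))) +
      (∑ u ∈ A, a * ∑ v ∈ B, ∑ w ∈ C,
        (ind (G v w) - b * ind (E₂ v w)) * (ind (E₁ u v) * ind (K u w))) +
      (∑ v ∈ B, (a * b) * ∑ u ∈ A, ∑ w ∈ C,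
        (ind (K u w) - c * ind (E₃ u w)) * (ind (E₁ u v) * ind (E₂ v w))) := by
    have e1 : ∀ f : γ → α → β → ℝ, ∑ w ∈ C, ∑ u ∈ A, ∑ v ∈ B, f w u v =
        ∑ u ∈ A, ∑ v ∈ B, ∑ w ∈ C, f w u v := fun f => by
      rw [sum_comm]
      exact sum_congr rfl fun u _ => sum_comm
    have e3 : ∀ f : β → α → γ → ℝ, ∑ v ∈ B, ∑ u ∈ A, ∑ w ∈ C, f v u w =
        ∑ u ∈ A, ∑ v ∈ B, ∑ w ∈ C, f v u w := fun f => sum_comm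
    simp only [mul_sum]
    rw [e1, e3, ← sum_add_distrib, ← sum_add_distrib]
    refine sum_congr rfl fun u _ => ?_
    rw [← sum_add_distrib, ← sum_add_distrib]
    refine sum_congr rfl fun v _ => ?_
    rw [← sum_add_distrib, ← sum_add_distrib]
    refine sum_congr rfl fun w _ => ?_
    ring
  rw [key]
  refine (abs_add_le _ _).trans ?_
  have := abs_add_le (∑ w ∈ C, ∑ u ∈ A, ∑ v ∈ B,
        (ind (F u v) - a * ind (E₁ u v)) * (ind (K u w) * ind (G v w)))
      (∑ u ∈ A, a * ∑ v ∈ B, ∑ w ∈ C,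
        (ind (G v w) - b * ind (E₂ v w)) * (ind (E₁ u v) * ind (K u w)))
  linarith

/-! ### Monochromatic triangles -/

/-- Multicolour Ramsey theorem for triangles, with the colour set as a `Finset`. -/
lemma ramsey_aux {C : Type*} (n : ℕ) : ∃ t : ℕ, ∀ (K : Finset C), #K = n →
    ∀ (A : Finset ℕ), t ≤ #A → ∀ f : ℕ → ℕ → C,
      (∀ i ∈ A, ∀ j ∈ A, i < j → f i j ∈ K) →
      ∃ i ∈ A, ∃ j ∈ A, ∃ k ∈ A, i < j ∧ j < k ∧ f j k = f i j ∧ f i k = f i j := by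
  induction n with
  | zero =>
    refine ⟨2, fun K hK A hA f hf => ?_⟩
    obtain ⟨i, hi, j, hj, hij⟩ := one_lt_card.mp (show 1 < #A by omega)
    rw [card_eq_zero] at hK
    subst hK
    rcases lt_or_gt_of_ne hij with h | h
    · exact absurd (hf i hi j hj h) (notMem_empty _)
    · exact absurd (hf j hj i hi h) (notMem_empty _)
  | succ n ih =>
    obtain ⟨t, ht⟩ := ih
    refine ⟨(n + 1) * t + 2, fun K hK A hA f hf => ?_⟩
    have hne : A.Nonempty := card_pos.mp (by omega)
    set m := A.min' hne with hm
    have hmA : m ∈ A := A.min'_mem hne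
    have hmlt : ∀ j ∈ A.erase m, m < j := fun j hj => by
      have := A.min'_le j (mem_of_mem_erase hj)
      exact lt_of_le_of_ne this (ne_of_mem_erase hj).symm
    have hmaps : ∀ j ∈ A.erase m, f m j ∈ K := fun j hj =>
      hf m hmA j (mem_of_mem_erase hj) (hmlt j hj)
    obtain ⟨c, hc, hcard⟩ := exists_lt_card_fiber_of_mul_lt_card_of_maps_to hmaps
      (n := t) (by rw [hK, card_erase_of_mem hmA]; omega)
    set B := (A.erase m).filter (fun j => f m j = c) with hB
    have hBA : ∀ j ∈ B, j ∈ A ∧ m < j ∧ f m j = c := fun j hj => by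
      rw [hB, mem_filter] at hj
      exact ⟨mem_of_mem_erase hj.1, hmlt j hj.1, hj.2⟩
    by_cases hex : ∃ i ∈ B, ∃ j ∈ B, i < j ∧ f i j = c
    · obtain ⟨i, hi, j, hj, hij, hfc⟩ := hex
      obtain ⟨hiA, hmi, hi'⟩ := hBA i hi
      obtain ⟨hjA, hmj, hj'⟩ := hBA j hj
      exact ⟨m, hmA, i, hiA, j, hjA, hmi, hij, by rw [hfc, hi'], by rw [hj', hi']⟩
    · push Not at hex
      obtain ⟨i, hi, j, hj, k, hk, h⟩ := ht (K.erase c) (by rw [card_erase_of_mem hc, hK]; rfl)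
        B hcard.le f (fun i hi j hj hij =>
          mem_erase.mpr ⟨hex i hi j hj hij, hf i (hBA i hi).1 j (hBA j hj).1 hij⟩)
      exact ⟨i, (hBA i hi).1, j, (hBA j hj).1, k, (hBA k hk).1, h⟩

lemma ramsey (C : Type*) [Fintype C] : ∃ t : ℕ, 0 < t ∧ ∀ f : ℕ → ℕ → C,
    ∃ i j k : ℕ, i < j ∧ j < k ∧ k < t ∧ f j k = f i j ∧ f i k = f i j := by
  obtain ⟨t, ht⟩ := ramsey_aux (C := C) (#(univ : Finset C))
  refine ⟨t + 1, t.succ_pos, fun f => ?_⟩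
  obtain ⟨i, -, j, -, k, hk, hij, hjk, h⟩ := ht univ rfl (range (t + 1)) (by simp) f
    (fun _ _ _ _ _ => mem_univ _)
  exact ⟨i, j, k, hij, hjk, mem_range.mp hk, h⟩

/-! ### Regular subsets for a tuple of vertex sets -/

section
variable {κ : Type*}

/-- The number of pairs in `A × B` that receive colour `a`. -/
noncomputable def ecol (φ : ℕ → ℕ → κ) (a : κ) (A B : Finset ℕ) : ℝ :=
  ∑ u ∈ A, ∑ v ∈ B, ind (φ u v = a)

/-- The density of colour `a` on `A × B` (zero if `A` or `B` is empty). -/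
noncomputable def dens (φ : ℕ → ℕ → κ) (a : κ) (A B : Finset ℕ) : ℝ :=
  ecol φ a A B / (#A * #B)

/-- The energy of the pair `(A, B)`: the sum over the colours of the squared density. -/
noncomputable def energy [Fintype κ] (φ : ℕ → ℕ → κ) (A B : Finset ℕ) : ℝ :=
  ∑ a, dens φ a A B ^ 2

/-- The two pieces into which `A` is split by `S ⊆ A`. -/
noncomputable def piece (S A : Finset ℕ) (b : Bool) : Finset ℕ := if b then S else A \ S

/-- The relative size of a piece of `A`. -/
noncomputable def wt (S A : Finset ℕ) (b : Bool) : ℝ := (#(piece S A b) : ℝ) / #A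

lemma piece_subset {S A : Finset ℕ} (h : S ⊆ A) (b : Bool) : piece S A b ⊆ A := by
  cases b <;> simp [piece, h]

lemma wt_nonneg (S A : Finset ℕ) (b : Bool) : 0 ≤ wt S A b := by unfold wt; positivity

lemma wt_sum {S A : Finset ℕ} (h : S ⊆ A) (hA : A.Nonempty) :
    wt S A true + wt S A false = 1 := by
  have : (#A : ℝ) ≠ 0 := by exact_mod_cast hA.card_pos.ne'
  have h2 : (#(A \ S) : ℝ) + #S = #A := by exact_mod_cast card_sdiff_add_card_eq_card h
  simp only [wt, piece, if_true, Bool.false_eq_true, if_false]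
  field_simp
  linarith

lemma ecol_nonneg (φ : ℕ → ℕ → κ) (a : κ) (A B : Finset ℕ) : 0 ≤ ecol φ a A B :=
  sum_nonneg fun _ _ => sum_nonneg fun _ _ => ind_nonneg _

lemma dens_nonneg (φ : ℕ → ℕ → κ) (a : κ) (A B : Finset ℕ) : 0 ≤ dens φ a A B :=
  div_nonneg (ecol_nonneg ..) (by positivity)

lemma dens_sum [Fintype κ] (φ : ℕ → ℕ → κ) {A B : Finset ℕ} (hA : A.Nonempty)
    (hB : B.Nonempty) : ∑ a, dens φ a A B = 1 := by
  have h1 : (#A : ℝ) ≠ 0 := by exact_mod_cast hA.card_pos.ne'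
  have h2 : (#B : ℝ) ≠ 0 := by exact_mod_cast hB.card_pos.ne'
  unfold dens ecol
  rw [← sum_div, sum_comm, div_eq_one_iff_eq (by positivity)]
  have : ∀ u ∈ A, ∑ a, ∑ v ∈ B, ind (φ u v = a) = #B := fun u _ => by
    rw [sum_comm]
    simp [ind]
  rw [sum_congr rfl this]
  simp

lemma dens_le_one [Fintype κ] (φ : ℕ → ℕ → κ) (a : κ) {A B : Finset ℕ} (hA : A.Nonempty)
    (hB : B.Nonempty) : dens φ a A B ≤ 1 := by
  rw [← dens_sum φ hA hB]
  exact single_le_sum (f := fun a => dens φ a A B) (fun i _ => dens_nonneg ..) (mem_univ a)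

lemma energy_nonneg [Fintype κ] (φ : ℕ → ℕ → κ) (A B : Finset ℕ) : 0 ≤ energy φ A B :=
  sum_nonneg fun _ _ => sq_nonneg _

lemma energy_le_one [Fintype κ] (φ : ℕ → ℕ → κ) {A B : Finset ℕ} (hA : A.Nonempty)
    (hB : B.Nonempty) : energy φ A B ≤ 1 := by
  rw [← dens_sum φ hA hB]
  refine sum_le_sum fun a _ => ?_
  nlinarith [dens_nonneg φ a A B, dens_le_one φ a hA hB]

/-- The number of `a`-coloured pairs on `A × B` is recovered from the density, even if one of
the sets is empty. -/
lemma dens_mul (φ : ℕ → ℕ → κ) (a : κ) (A B : Finset ℕ) :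
    dens φ a A B * (#A * #B) = ecol φ a A B := by
  rcases A.eq_empty_or_nonempty with rfl | hA
  · simp [ecol]
  rcases B.eq_empty_or_nonempty with rfl | hB
  · simp [ecol]
  have h1 : (#A : ℝ) ≠ 0 := by exact_mod_cast hA.card_pos.ne'
  have h2 : (#B : ℝ) ≠ 0 := by exact_mod_cast hB.card_pos.ne'
  unfold dens
  field_simp

lemma dens_left (φ : ℕ → ℕ → κ) (a : κ) {S A : Finset ℕ} (B : Finset ℕ) (h : S ⊆ A)
    (hA : A.Nonempty) : dens φ a A B =
      wt S A true * dens φ a (piece S A true) B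
        + wt S A false * dens φ a (piece S A false) B := by
  rcases B.eq_empty_or_nonempty with rfl | hB
  · simp [dens, ecol]
  have h1 : (#A : ℝ) ≠ 0 := by exact_mod_cast hA.card_pos.ne'
  have h2 : (#B : ℝ) ≠ 0 := by exact_mod_cast hB.card_pos.ne'
  have e : ecol φ a A B = ecol φ a (piece S A true) B + ecol φ a (piece S A false) B := by
    simp only [ecol, piece, if_true, Bool.false_eq_true, if_false]
    rw [add_comm, sum_sdiff h]
  have e1 := dens_mul φ a (piece S A true) B
  have e2 := dens_mul φ a (piece S A false) B
  rw [dens, e, ← e1, ← e2]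
  unfold wt
  field_simp

lemma dens_right (φ : ℕ → ℕ → κ) (a : κ) {T B : Finset ℕ} (A : Finset ℕ) (h : T ⊆ B)
    (hB : B.Nonempty) : dens φ a A B =
      wt T B true * dens φ a A (piece T B true)
        + wt T B false * dens φ a A (piece T B false) := by
  rcases A.eq_empty_or_nonempty with rfl | hA
  · simp [dens, ecol]
  have h1 : (#A : ℝ) ≠ 0 := by exact_mod_cast hA.card_pos.ne'
  have h2 : (#B : ℝ) ≠ 0 := by exact_mod_cast hB.card_pos.ne'
  have e : ecol φ a A B = ecol φ a A (piece T B true) + ecol φ a A (piece T B false) := by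
    simp only [ecol, piece, if_true, Bool.false_eq_true, if_false]
    rw [← sum_add_distrib]
    refine sum_congr rfl fun u _ => ?_
    rw [add_comm, sum_sdiff h]
  have e1 := dens_mul φ a A (piece T B true)
  have e2 := dens_mul φ a A (piece T B false)
  rw [dens, e, ← e1, ← e2]
  unfold wt
  field_simp

lemma sq_convex {w v x y d : ℝ} (hw : 0 ≤ w) (hv : 0 ≤ v) (h : w + v = 1)
    (hd : d = w * x + v * y) : d ^ 2 ≤ w * x ^ 2 + v * y ^ 2 := by
  have hv' : v = 1 - w := by linarith
  subst hd hv'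
  nlinarith [mul_nonneg (mul_nonneg hw hv) (sq_nonneg (x - y))]

lemma energy_left [Fintype κ] (φ : ℕ → ℕ → κ) {S A : Finset ℕ} (B : Finset ℕ) (h : S ⊆ A)
    (hA : A.Nonempty) : energy φ A B ≤
      wt S A true * energy φ (piece S A true) B + wt S A false * energy φ (piece S A false) B := by
  unfold energy
  rw [mul_sum, mul_sum, ← sum_add_distrib]
  exact sum_le_sum fun a _ => sq_convex (wt_nonneg ..) (wt_nonneg ..) (wt_sum h hA)
    (dens_left φ a B h hA)

lemma energy_right [Fintype κ] (φ : ℕ → ℕ → κ) {T B : Finset ℕ} (A : Finset ℕ) (h : T ⊆ B)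
    (hB : B.Nonempty) : energy φ A B ≤
      wt T B true * energy φ A (piece T B true) + wt T B false * energy φ A (piece T B false) := by
  unfold energy
  rw [mul_sum, mul_sum, ← sum_add_distrib]
  exact sum_le_sum fun a _ => sq_convex (wt_nonneg ..) (wt_nonneg ..) (wt_sum h hB)
    (dens_right φ a A h hB)

/-- A variance bound: the mean of the squares exceeds the square of the mean by at least the
square of the weighted deviation of a single cell. -/
lemma sq_gain {w w' v v' p q r s d : ℝ} (hw : 0 ≤ w) (hw' : 0 ≤ w') (hv : 0 ≤ v) (hv' : 0 ≤ v')
    (h : w + w' = 1) (h' : v + v' = 1)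
    (hd : d = w * (v * p + v' * q) + w' * (v * r + v' * s)) :
    d ^ 2 + (w * v * (p - d)) ^ 2
      ≤ w * (v * p ^ 2 + v' * q ^ 2) + w' * (v * r ^ 2 + v' * s ^ 2) := by
  have key : w * (v * p ^ 2 + v' * q ^ 2) + w' * (v * r ^ 2 + v' * s ^ 2) - d ^ 2
      = w * v * (p - d) ^ 2 + w * v' * (q - d) ^ 2 + w' * v * (r - d) ^ 2
        + w' * v' * (s - d) ^ 2 := by
    have e : w' = 1 - w := by linarith
    have e' : v' = 1 - v := by linarith
    subst e e'
    linear_combination (-2 * d) * hd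
  have h1 : 0 ≤ w * v' * (q - d) ^ 2 := by positivity
  have h2 : 0 ≤ w' * v * (r - d) ^ 2 := by positivity
  have h3 : 0 ≤ w' * v' * (s - d) ^ 2 := by positivity
  have h4 : w * v ≤ 1 := mul_le_one₀ (by linarith) hv (by linarith)
  have h5 : (w * v * (p - d)) ^ 2 ≤ w * v * (p - d) ^ 2 := by
    have : (w * v * (p - d)) ^ 2 = (w * v) * (w * v * (p - d) ^ 2) := by ring
    rw [this]
    exact mul_le_of_le_one_left (by positivity) h4
  linarith

/-- Splitting both sides of a pair along sets witnessing irregularity in colour `a` increases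
the expected energy by the square of the discrepancy. -/
lemma energy_gain [Fintype κ] (φ : ℕ → ℕ → κ) (a : κ) {S A T B : Finset ℕ} (hS : S ⊆ A)
    (hT : T ⊆ B) (hA : A.Nonempty) (hB : B.Nonempty) :
    energy φ A B + ((ecol φ a S T - dens φ a A B * (#S * #T)) / (#A * #B)) ^ 2 ≤
      wt S A true * (wt T B true * energy φ (piece S A true) (piece T B true)
          + wt T B false * energy φ (piece S A true) (piece T B false))
        + wt S A false * (wt T B true * energy φ (piece S A false) (piece T B true)
          + wt T B false * energy φ (piece S A false) (piece T B false)) := by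
  have hd : ∀ c, dens φ c A B = wt S A true * (wt T B true * dens φ c (piece S A true) (piece T B true)
          + wt T B false * dens φ c (piece S A true) (piece T B false))
        + wt S A false * (wt T B true * dens φ c (piece S A false) (piece T B true)
          + wt T B false * dens φ c (piece S A false) (piece T B false)) := fun c => by
    rw [← dens_right φ c _ hT hB, ← dens_right φ c _ hT hB, ← dens_left φ c _ hS hA]
  have hg := fun c => sq_gain (wt_nonneg S A true) (wt_nonneg S A false) (wt_nonneg T B true)
    (wt_nonneg T B false) (wt_sum hS hA) (wt_sum hT hB) (hd c)
  have h1 : (#A : ℝ) ≠ 0 := by exact_mod_cast hA.card_pos.ne'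
  have h2 : (#B : ℝ) ≠ 0 := by exact_mod_cast hB.card_pos.ne'
  have heq : (ecol φ a S T - dens φ a A B * (#S * #T)) / (#A * #B) =
      wt S A true * wt T B true * (dens φ a (piece S A true) (piece T B true) - dens φ a A B) := by
    rw [← dens_mul φ a S T]
    simp only [wt, piece, if_true]
    field_simp
  have hsum := sum_le_sum (s := (univ : Finset κ)) fun c _ => hg c
  have hsingle := single_le_sum (s := (univ : Finset κ))
    (f := fun c => (wt S A true * wt T B true *
      (dens φ c (piece S A true) (piece T B true) - dens φ c A B)) ^ 2)
    (fun c _ => sq_nonneg _) (mem_univ a)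
  rw [heq]
  unfold energy
  simp only [mul_sum, mul_add, ← sum_add_distrib] at hsum ⊢
  rw [sum_add_distrib] at hsum
  refine le_trans ?_ hsum
  gcongr

/-- The potential maximised in the regularity argument: total energy of the pairs plus a small
multiple of the logarithms of the sizes, which penalises shrinking the sets. -/
noncomputable def potential [Fintype κ] (φ : ℕ → ℕ → κ) (γ : ℝ) {t : ℕ}
    (V : Fin t → Finset ℕ) : ℝ :=
  ∑ k, ∑ l, (if k < l then energy φ (V k) (V l) else 0) + γ * ∑ k, Real.log #(V k)

lemma mul_log_ge {w : ℝ} (hw : 0 ≤ w) : w - 1 ≤ w * Real.log w := by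
  rcases hw.eq_or_lt with rfl | hw
  · simp
  have := Real.one_sub_inv_le_log_of_pos hw
  have h2 := mul_le_mul_of_nonneg_left this hw.le
  rwa [mul_sub, mul_one, mul_inv_cancel₀ hw.ne'] at h2

/-- Replace the `i`-th and `j`-th sets of a tuple by the indicated pieces. -/
noncomputable def splitAt {t : ℕ} (V : Fin t → Finset ℕ) (i j : Fin t) (S T : Finset ℕ)
    (b c : Bool) : Fin t → Finset ℕ :=
  Function.update (Function.update V i (piece S (V i) b)) j (piece T (V j) c)

lemma splitAt_right {t : ℕ} (V : Fin t → Finset ℕ) (i j : Fin t) (S T : Finset ℕ) (b c : Bool) :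
    splitAt V i j S T b c j = piece T (V j) c := by simp [splitAt]

lemma splitAt_left {t : ℕ} (V : Fin t → Finset ℕ) {i j : Fin t} (h : i ≠ j) (S T : Finset ℕ)
    (b c : Bool) : splitAt V i j S T b c i = piece S (V i) b := by
  simp [splitAt, Function.update_of_ne h]

lemma splitAt_other {t : ℕ} (V : Fin t → Finset ℕ) {i j k : Fin t} (hi : k ≠ i) (hj : k ≠ j)
    (S T : Finset ℕ) (b c : Bool) : splitAt V i j S T b c k = V k := by
  simp [splitAt, Function.update_of_ne hi, Function.update_of_ne hj]

/-- The expected potential after a random split along `S ⊆ V i` and `T ⊆ V j` (pieces being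
chosen with probability proportional to their size): the energy gains the squared discrepancy
and the logarithmic term loses at most the entropy of the split. -/
lemma potential_split [Fintype κ] (φ : ℕ → ℕ → κ) {γ : ℝ} (hγ : 0 ≤ γ) {t : ℕ}
    (V : Fin t → Finset ℕ) (hV : ∀ k, (V k).Nonempty) {i j : Fin t} (hij : i < j) (a : κ)
    {S T : Finset ℕ} (hS : S ⊆ V i) (hT : T ⊆ V j) :
    potential φ γ V + ((ecol φ a S T - dens φ a (V i) (V j) * (#S * #T)) / (#(V i) * #(V j))) ^ 2
      - 2 * γ ≤
    ∑ b, ∑ c, wt S (V i) b * wt T (V j) c * potential φ γ (splitAt V i j S T b c) := by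
  set g := ((ecol φ a S T - dens φ a (V i) (V j) * (#S * #T)) / (#(V i) * #(V j))) ^ 2 with hg
  set w := wt S (V i) with hw
  set v := wt T (V j) with hv
  have hws : w true + w false = 1 := wt_sum hS (hV i)
  have hvs : v true + v false = 1 := wt_sum hT (hV j)
  have hE : ∀ k l, (if k < l then energy φ (V k) (V l) else 0) + (if k = i ∧ l = j then g else 0) ≤
      ∑ b, ∑ c, w b * v c * (if k < l then
        energy φ (splitAt V i j S T b c k) (splitAt V i j S T b c l) else 0) := by
    intro k l
    by_cases hkl : k < l
    swap
    · have : ¬ (k = i ∧ l = j) := fun h => hkl (by rw [h.1, h.2]; exact hij)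
      simp [hkl, this]
    simp only [hkl, if_true, Fintype.sum_bool]
    by_cases hki : k = i
    · subst hki
      by_cases hlj : l = j
      · subst hlj
        have := energy_gain φ a hS hT (hV k) (hV l)
        simp only [splitAt_right, splitAt_left V hij.ne, and_self, if_true]
        refine this.trans (le_of_eq ?_)
        ring
      · have := energy_left φ (V l) hS (hV k)
        simp only [splitAt_left V hij.ne, splitAt_other V hkl.ne' hlj, hlj, and_false, if_false]
        refine le_trans (by simpa using this) (le_of_eq ?_)
        linear_combination (-(w true * energy φ (piece S (V k) true) (V l)
          + w false * energy φ (piece S (V k) false) (V l))) * hvs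
    · simp only [hki, false_and, if_false, add_zero]
      by_cases hkj : k = j
      · subst hkj
        have hli : l ≠ i := (hij.trans hkl).ne'
        have := energy_left φ (V l) hT (hV k)
        simp only [splitAt_right, splitAt_other V hli hkl.ne']
        refine le_trans this (le_of_eq ?_)
        linear_combination (-(v true * energy φ (piece T (V k) true) (V l)
          + v false * energy φ (piece T (V k) false) (V l))) * hws
      · simp only [splitAt_other V hki hkj]
        by_cases hli : l = i
        · subst hli
          have := energy_right φ (V k) hS (hV l)
          simp only [splitAt_left V hij.ne]
          refine le_trans this (le_of_eq ?_)
          linear_combination (-(w true * energy φ (V k) (piece S (V l) true)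
            + w false * energy φ (V k) (piece S (V l) false))) * hvs
        · by_cases hlj : l = j
          · subst hlj
            have := energy_right φ (V k) hT (hV l)
            simp only [splitAt_right]
            refine le_trans this (le_of_eq ?_)
            linear_combination (-(v true * energy φ (V k) (piece T (V l) true)
              + v false * energy φ (V k) (piece T (V l) false))) * hws
          · simp only [splitAt_other V hli hlj]
            refine le_of_eq ?_
            have h1 : w false = 1 - w true := by linarith
            have h2 : v false = 1 - v true := by linarith
            rw [h1, h2]
            ring
  have hlog : ∀ b c, w b * v c * (∑ k, Real.log #(V k)) + v c * (w b - 1) + w b * (v c - 1) ≤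
      w b * v c * ∑ k, Real.log #(splitAt V i j S T b c k) := by
    intro b c
    have hw0 : 0 ≤ w b := wt_nonneg ..
    have hv0 : 0 ≤ v c := wt_nonneg ..
    have hx : w b * v c * ∑ k, Real.log #(splitAt V i j S T b c k) =
        w b * v c * (∑ k, Real.log #(V k)) + v c * (w b * Real.log (w b))
          + w b * (v c * Real.log (v c)) := by
      rcases hw0.eq_or_lt with h0 | hwpos
      · rw [← h0]; simp
      rcases hv0.eq_or_lt with h0 | hvpos
      · rw [← h0]; simp
      have hsum : ∑ k, Real.log #(splitAt V i j S T b c k) =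
          ∑ k, (Real.log #(V k) + (if k = i then Real.log (w b) else 0)
            + (if k = j then Real.log (v c) else 0)) := by
        have aux : ∀ (S A : Finset ℕ), A.Nonempty → ∀ b, 0 < wt S A b →
            Real.log #(piece S A b) = Real.log #A + Real.log (wt S A b) := by
          intro S A hA b hb
          have h1 : (#A : ℝ) ≠ 0 := by exact_mod_cast hA.card_pos.ne'
          rw [← Real.log_mul h1 hb.ne', wt, mul_div_cancel₀ _ h1]
        refine sum_congr rfl fun k _ => ?_
        by_cases hki : k = i
        · subst hki
          rw [splitAt_left V hij.ne, aux S _ (hV k) b hwpos]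
          simp [hij.ne, hw]
        · by_cases hkj : k = j
          · subst hkj
            rw [splitAt_right, aux T _ (hV k) c hvpos]
            simp [hki, hv]
          · rw [splitAt_other V hki hkj]
            simp [hki, hkj]
      rw [hsum, sum_add_distrib, sum_add_distrib]
      simp only [sum_ite_eq', mem_univ, if_true]
      ring
    rw [hx]
    have h1 := mul_le_mul_of_nonneg_left (mul_log_ge hw0) hv0
    have h2 := mul_le_mul_of_nonneg_left (mul_log_ge hv0) hw0
    linarith
  have hEsum : ∑ k, ∑ l, (if k < l then energy φ (V k) (V l) else 0) + g ≤
      ∑ b, ∑ c, w b * v c * ∑ k, ∑ l, (if k < l then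
        energy φ (splitAt V i j S T b c k) (splitAt V i j S T b c l) else 0) := by
    have h1 := sum_le_sum fun k (_ : k ∈ univ) => sum_le_sum fun l (_ : l ∈ univ) => hE k l
    simp only [sum_add_distrib] at h1
    have h2 : ∑ k, ∑ l, (if k = i ∧ l = j then g else 0) = g := by
      simp [ite_and]
    rw [h2] at h1
    refine h1.trans (le_of_eq ?_)
    simp only [Fintype.sum_bool, sum_add_distrib, mul_sum]
  have hlogsum := sum_le_sum fun b (_ : b ∈ univ) => sum_le_sum fun c (_ : c ∈ univ) => hlog b c
  have hlogsum2 : (∑ k, Real.log #(V k)) - 2 ≤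
      ∑ b, ∑ c, w b * v c * ∑ k, Real.log #(splitAt V i j S T b c k) := by
    refine le_trans (le_of_eq ?_) hlogsum
    simp only [Fintype.sum_bool]
    have h1 : w false = 1 - w true := by linarith
    have h2 : v false = 1 - v true := by linarith
    rw [h1, h2]
    ring
  have h3 := mul_le_mul_of_nonneg_left hlogsum2 hγ
  unfold potential
  simp only [Fintype.sum_bool] at hEsum h3 ⊢
  linarith

/-- A regularity lemma for tuples: nonempty sets `B i` contain large subsets `V i` such that all
pairs `(V i, V j)`, `i < j`, are regular (in cut norm) in every colour. -/
lemma regular_tuple [Fintype κ] (φ : ℕ → ℕ → κ) {γ : ℝ} (hγ : 0 < γ) {t : ℕ}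
    (B : Fin t → Finset ℕ) (hB : ∀ k, (B k).Nonempty) :
    ∃ V : Fin t → Finset ℕ, (∀ k, V k ⊆ B k) ∧ (∀ k, (V k).Nonempty) ∧
      (∀ k, Real.exp (-(t ^ 2 / γ)) * #(B k) ≤ #(V k)) ∧
      ∀ i j, i < j → ∀ a, ∀ S ⊆ V i, ∀ T ⊆ V j,
        |ecol φ a S T - dens φ a (V i) (V j) * (#S * #T)| ≤ √(2 * γ) * (#(V i) * #(V j)) := by
  set 𝒯 : Finset (Fin t → Finset ℕ) := Fintype.piFinset fun k => (B k).powerset.erase ∅ with h𝒯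
  have hmem : ∀ V, V ∈ 𝒯 ↔ ∀ k, (V k).Nonempty ∧ V k ⊆ B k := fun V => by
    simp [h𝒯, Fintype.mem_piFinset, nonempty_iff_ne_empty]
  obtain ⟨V, hV, hmax⟩ := exists_max_image 𝒯 (potential φ γ)
    ⟨B, (hmem B).mpr fun k => ⟨hB k, subset_rfl⟩⟩
  rw [hmem] at hV
  refine ⟨V, fun k => (hV k).2, fun k => (hV k).1, fun k => ?_, ?_⟩
  · have h1 := hmax B ((hmem B).mpr fun k => ⟨hB k, subset_rfl⟩)
    unfold potential at h1
    have h2 : 0 ≤ ∑ k, ∑ l, (if k < l then energy φ (B k) (B l) else 0) :=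
      sum_nonneg fun k _ => sum_nonneg fun l _ => by
        split_ifs
        · exact energy_nonneg ..
        · exact le_rfl
    have h3 : ∑ k, ∑ l, (if k < l then energy φ (V k) (V l) else 0) ≤ (t : ℝ) ^ 2 := by
      calc _ ≤ ∑ k : Fin t, ∑ l : Fin t, (1 : ℝ) :=
            sum_le_sum fun k _ => sum_le_sum fun l _ => by
              split_ifs
              · exact energy_le_one φ (hV k).1 (hV l).1
              · exact zero_le_one
        _ = (t : ℝ) ^ 2 := by simp [sq]
    have hpos : ∀ k, (0 : ℝ) < #(V k) := fun k => by exact_mod_cast (hV k).1.card_pos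
    have hposB : ∀ k, (0 : ℝ) < #(B k) := fun k => by exact_mod_cast (hB k).card_pos
    have h4 : ∑ l, (Real.log #(B l) - Real.log #(V l)) ≤ t ^ 2 / γ := by
      rw [sum_sub_distrib, le_div_iff₀ hγ]
      nlinarith
    have h5 := single_le_sum (s := univ) (f := fun l => Real.log #(B l) - Real.log #(V l))
      (fun l _ => sub_nonneg.mpr (Real.log_le_log (hpos l)
        (by exact_mod_cast card_le_card (hV l).2))) (mem_univ k)
    rw [← Real.log_le_log_iff (by have := hposB k; positivity) (hpos k),
      Real.log_mul (Real.exp_ne_zero _) (hposB k).ne', Real.log_exp]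
    linarith
  · intro i j hij a S hS T hT
    have h1 := potential_split φ hγ.le V (fun k => (hV k).1) hij a hS hT
    have h2 : ∑ b, ∑ c, wt S (V i) b * wt T (V j) c * potential φ γ (splitAt V i j S T b c) ≤
        ∑ b, ∑ c, wt S (V i) b * wt T (V j) c * potential φ γ V := by
      refine sum_le_sum fun b _ => sum_le_sum fun c _ => ?_
      have hw0 := wt_nonneg S (V i) b
      have hv0 := wt_nonneg T (V j) c
      rcases hw0.eq_or_lt with h0 | hwpos
      · rw [← h0]; simp
      rcases hv0.eq_or_lt with h0 | hvpos
      · rw [← h0]; simp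
      have aux : ∀ (S A : Finset ℕ) b, 0 < wt S A b → (piece S A b).Nonempty := by
        intro S A b hb
        by_contra hne
        rw [not_nonempty_iff_eq_empty] at hne
        simp [wt, hne] at hb
      refine mul_le_mul_of_nonneg_left (hmax _ ((hmem _).mpr fun k => ?_)) (by positivity)
      by_cases hkj : k = j
      · subst hkj
        rw [splitAt_right]
        exact ⟨aux _ _ _ hvpos, (piece_subset hT c).trans (hV k).2⟩
      by_cases hki : k = i
      · subst hki
        rw [splitAt_left V hij.ne]
        exact ⟨aux _ _ _ hwpos, (piece_subset hS b).trans (hV k).2⟩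
      rw [splitAt_other V hki hkj]
      exact hV k
    have h3 : ∑ b, ∑ c, wt S (V i) b * wt T (V j) c * potential φ γ V = potential φ γ V := by
      simp only [Fintype.sum_bool]
      have h1 : wt S (V i) false = 1 - wt S (V i) true := by linarith [wt_sum hS (hV i).1]
      have h2 : wt T (V j) false = 1 - wt T (V j) true := by linarith [wt_sum hT (hV j).1]
      rw [h1, h2]
      ring
    rw [h3] at h2
    have h4 : ((ecol φ a S T - dens φ a (V i) (V j) * (#S * #T)) / (#(V i) * #(V j))) ^ 2
        ≤ 2 * γ := by linarith
    have hposi : (0 : ℝ) < #(V i) := by exact_mod_cast (hV i).1.card_pos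
    have hposj : (0 : ℝ) < #(V j) := by exact_mod_cast (hV j).1.card_pos
    have h5 := Real.abs_le_sqrt h4
    rwa [abs_div, abs_of_pos (mul_pos hposi hposj), div_le_iff₀ (mul_pos hposi hposj)] at h5

end

/-! ### Palettes as sums over colours -/

section
variable {κ : Type*}

lemma sum_ind_eq [Fintype κ] (f : κ → ℝ) (k : κ) : ∑ a, ind (k = a) * f a = f k := by
  rw [sum_eq_single k]
  · simp [ind]
  · intro b _ hb
    rw [ind_not (Ne.symm hb), zero_mul]
  · simp

lemma ind_palette [Fintype κ] (P : κ → κ → κ → Prop) (k l m : κ) :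
    ind (P k l m) = ∑ a, ∑ b, ∑ c, ind (P a b c) * (ind (k = a) * ind (l = b) * ind (m = c)) := by
  have h : ∀ a b, ∑ c, ind (P a b c) * (ind (k = a) * ind (l = b) * ind (m = c)) =
      ind (k = a) * (ind (l = b) * ind (P a b m)) := fun a b => by
    rw [← sum_ind_eq (fun c => ind (P a b c)) m, mul_sum, mul_sum]
    exact sum_congr rfl fun c _ => by ring
  simp only [h]
  have h2 : ∀ a, ∑ b, ind (k = a) * (ind (l = b) * ind (P a b m)) =
      ind (k = a) * ind (P a l m) := fun a => by
    rw [← mul_sum, sum_ind_eq (fun b => ind (P a b m)) l]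
  simp only [h2, sum_ind_eq (fun a => ind (P a l m)) k]

lemma sum_palette {α β γ : Type*} [Fintype κ] (P : κ → κ → κ → Prop) (A : Finset α) (B : Finset β)
    (C : Finset γ) (f : α → β → κ) (g : β → γ → κ) (h : α → γ → κ) (r : α → β → γ → ℝ) :
    ∑ u ∈ A, ∑ v ∈ B, ∑ w ∈ C, ind (P (f u v) (g v w) (h u w)) * r u v w =
      ∑ a, ∑ b, ∑ c, ind (P a b c) * ∑ u ∈ A, ∑ v ∈ B, ∑ w ∈ C,
        ind (f u v = a) * ind (g v w = b) * ind (h u w = c) * r u v w := by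
  have e : ∀ u v w, ind (P (f u v) (g v w) (h u w)) * r u v w = ∑ p : κ × κ × κ,
      ind (P p.1 p.2.1 p.2.2) * (ind (f u v = p.1) * ind (g v w = p.2.1) * ind (h u w = p.2.2)
        * r u v w) := fun u v w => by
    rw [ind_palette P, Fintype.sum_prod_type, sum_mul]
    refine sum_congr rfl fun a _ => ?_
    rw [Fintype.sum_prod_type, sum_mul]
    refine sum_congr rfl fun b _ => ?_
    rw [sum_mul]
    exact sum_congr rfl fun c _ => by ring
  have e2 : ∀ F : κ → κ → κ → ℝ, ∑ a, ∑ b, ∑ c, F a b c = ∑ p : κ × κ × κ, F p.1 p.2.1 p.2.2 :=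
    fun F => by simp only [Fintype.sum_prod_type]
  rw [e2]
  simp only [e, mul_sum]
  symm
  rw [sum_comm (s := (univ : Finset (κ × κ × κ))) (t := A)]
  refine sum_congr rfl fun u _ => ?_
  rw [sum_comm (s := (univ : Finset (κ × κ × κ))) (t := B)]
  refine sum_congr rfl fun v _ => ?_
  rw [sum_comm (s := (univ : Finset (κ × κ × κ))) (t := C)]

/-- In a regular triple the number of palette triangles is governed by the pair densities. -/
lemma triple_upper [Fintype κ] (P : κ → κ → κ → Prop) (φ : ℕ → ℕ → κ) {A B C : Finset ℕ}
    (hA : A.Nonempty) (hB : B.Nonempty) (hC : C.Nonempty) {s : ℝ} (hs : 0 ≤ s)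
    (hAB : ∀ a, ∀ S ⊆ A, ∀ T ⊆ B, |ecol φ a S T - dens φ a A B * (#S * #T)| ≤ s * (#A * #B))
    (hBC : ∀ a, ∀ S ⊆ B, ∀ T ⊆ C, |ecol φ a S T - dens φ a B C * (#S * #T)| ≤ s * (#B * #C))
    (hAC : ∀ a, ∀ S ⊆ A, ∀ T ⊆ C, |ecol φ a S T - dens φ a A C * (#S * #T)| ≤ s * (#A * #C)) :
    ∑ u ∈ A, ∑ v ∈ B, ∑ w ∈ C, ind (P (φ u v) (φ v w) (φ u w)) ≤
      ∑ a, ∑ b, ∑ c, (ind (P a b c) * (dens φ a A B * dens φ b B C * dens φ c A C) + 3 * s)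
        * (#A * #B * #C) := by
  have h0 := sum_palette P A B C φ φ φ (fun _ _ _ => 1)
  simp only [mul_one] at h0
  rw [h0]
  refine sum_le_sum fun a _ => sum_le_sum fun b _ => sum_le_sum fun c _ => ?_
  have conv : ∀ (a : κ) (X Y : Finset ℕ) (d : ℝ),
      ∑ u ∈ X, ∑ v ∈ Y, (ind (φ u v = a) - d * ind True) = ecol φ a X Y - d * (#X * #Y) := by
    intro a X Y d
    simp only [ecol, sum_sub_distrib, ind_of trivial, sum_const, nsmul_eq_mul]
    ring
  have h := count A B C (fun u v => φ u v = a) (fun _ _ => True) (fun u v => φ u v = b)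
    (fun _ _ => True) (fun u v => φ u v = c) (fun _ _ => True) (dens φ a A B) (dens φ b B C)
    (dens φ c A C) (s * (#A * #B)) (s * (#B * #C)) (s * (#A * #C))
    (dens_nonneg _ _ _ _) (dens_le_one _ _ hA hB) (dens_nonneg _ _ _ _) (dens_le_one _ _ hB hC)
    (fun S hS T hT => by simpa only [conv] using hAB a S hS T hT)
    (fun S hS T hT => by simpa only [conv] using hBC b S hS T hT)
    (fun S hS T hT => by simpa only [conv] using hAC c S hS T hT)
  simp only [sum_sub_distrib, ind_of trivial, sum_const, nsmul_eq_mul, mul_one] at h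
  have h' := (abs_le.mp h).2
  have hp0 := ind_nonneg (P a b c)
  have hp1 := ind_le_one (P a b c)
  have hpos : 0 ≤ 3 * s * ((#A : ℝ) * #B * #C) := by positivity
  nlinarith [mul_le_mul_of_nonneg_left h' hp0, mul_nonneg (sub_nonneg.mpr hp1) hpos]


lemma exists_enum (V : Finset ℕ) (ord : ℕ → ℕ) (h : Set.InjOn ord V) :
    ∃ g : ℕ → ℕ, (∀ r < #V, g r ∈ V) ∧ ∀ r s, r < s → s < #V → ord (g r) < ord (g s) := by
  have hc : #(V.image ord) = #V := card_image_of_injOn h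
  have hx : ∀ r : Fin #V, ∃ v ∈ V, ord v = (V.image ord).orderEmbOfFin hc r := fun r =>
    mem_image.mp (orderEmbOfFin_mem _ hc r)
  choose g hg hg' using hx
  refine ⟨fun r => if hr : r < #V then g ⟨r, hr⟩ else 0, fun r hr => ?_, fun r s hrs hs => ?_⟩
  · simp [hr, hg]
  · simp only [hs, hrs.trans hs, dif_pos, hg']
    exact ((V.image ord).orderEmbOfFin hc).strictMono hrs

end

/-! ### The upper bound for graphs satisfying a palette -/

section
variable {κ : Type*}

/-- `H` satisfies the palette `P`: it has a vertex ordering and a colouring `φ` of the pairs such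
that every edge `u < v < w` satisfies `P (φ u v) (φ v w) (φ u w)`.  Only the values of `φ` on pairs
that are increasing in the ordering matter, so `φ` is not required to be symmetric; and an arbitrary
colour type `κ` with a ternary relation replaces a finite set of triples of natural numbers. -/
def Sat (P : κ → κ → κ → Prop) (H : ThreeGraph) : Prop :=
  ∃ (ord : ℕ → ℕ) (φ : ℕ → ℕ → κ), Set.InjOn ord H.verts ∧
    ∀ u v w : ℕ, ({u, v, w} : Finset ℕ) ∈ H.edges → ord u < ord v → ord v < ord w →
      P (φ u v) (φ v w) (φ u w)

lemma eVVV_eq_sum (H : ThreeGraph) (X Y Z : Finset ℕ) :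
    (eVVV H X Y Z : ℝ) = ∑ x ∈ X, ∑ y ∈ Y, ∑ z ∈ Z, ind (({x, y, z} : Finset ℕ) ∈ H.edges) := by
  simp only [eVVV, card_filter, sum_product, ind]
  push_cast
  refine sum_congr rfl fun x _ => sum_congr rfl fun y _ => sum_congr rfl fun z _ => ?_
  congr

lemma ind_near (p : Prop) {a b c b' c' N s : ℝ} (a0 : 0 ≤ a) (a1 : a ≤ 1) (b0 : 0 ≤ b)
    (b1 : b ≤ 1) (c0 : 0 ≤ c') (c1 : c' ≤ 1) (hb : b' - b ≤ 1 / N) (hc : c' - c ≤ 1 / N)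
    (hN : 0 < N) : ind p * (a * b' * c') + 3 * s ≤ ind p * (a * b * c) + (2 / N + 3 * s) := by
  have hN1 : 0 ≤ 1 / N := by positivity
  have s1 : (b' - b) * c' ≤ 1 / N := by
    calc (b' - b) * c' ≤ 1 / N * c' := mul_le_mul_of_nonneg_right hb c0
      _ ≤ 1 / N * 1 := mul_le_mul_of_nonneg_left c1 hN1
      _ = _ := mul_one _
  have s2 : b * (c' - c) ≤ 1 / N := by
    calc b * (c' - c) ≤ b * (1 / N) := mul_le_mul_of_nonneg_left hc b0
      _ ≤ 1 * (1 / N) := mul_le_mul_of_nonneg_right b1 hN1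
      _ = _ := one_mul _
  have h2 : 2 / N = 1 / N + 1 / N := by ring
  have key : a * b' * c' - a * b * c ≤ 2 / N := by
    calc a * b' * c' - a * b * c = a * ((b' - b) * c' + b * (c' - c)) := by ring
      _ ≤ a * (2 / N) := mul_le_mul_of_nonneg_left (by linarith) a0
      _ ≤ 1 * (2 / N) := mul_le_mul_of_nonneg_right a1 (by linarith)
      _ = _ := one_mul _
  by_cases hp : p
  · rw [ind_of hp]; linarith
  · rw [ind_not hp]; linarith

/-- If moreover the three pairs have nearly the same colour densities, the triangle density is
nearly a value of the palette polynomial. -/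
lemma triple_lagrangian [Fintype κ] (P : κ → κ → κ → Prop) {Λ : ℝ}
    (hΛ : ∀ x : κ → ℝ, (∀ a, 0 ≤ x a) → ∑ a, x a = 1 →
      ∑ a, ∑ b, ∑ c, ind (P a b c) * (x a * x b * x c) ≤ Λ)
    (φ : ℕ → ℕ → κ) {A B C : Finset ℕ}
    (hA : A.Nonempty) (hB : B.Nonempty) (hC : C.Nonempty) {s : ℝ} (hs : 0 ≤ s)
    (hAB : ∀ a, ∀ S ⊆ A, ∀ T ⊆ B, |ecol φ a S T - dens φ a A B * (#S * #T)| ≤ s * (#A * #B))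
    (hBC : ∀ a, ∀ S ⊆ B, ∀ T ⊆ C, |ecol φ a S T - dens φ a B C * (#S * #T)| ≤ s * (#B * #C))
    (hAC : ∀ a, ∀ S ⊆ A, ∀ T ⊆ C, |ecol φ a S T - dens φ a A C * (#S * #T)| ≤ s * (#A * #C))
    {N : ℝ} (hN : 0 < N) (n1 : ∀ a, dens φ a B C - dens φ a A B ≤ 1 / N)
    (n2 : ∀ a, dens φ a A C - dens φ a A B ≤ 1 / N) :
    ∑ u ∈ A, ∑ v ∈ B, ∑ w ∈ C, ind (P (φ u v) (φ v w) (φ u w)) ≤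
      (Λ + (Fintype.card κ : ℝ) ^ 3 * (2 / N + 3 * s)) * (#A * #B * #C) := by
  refine (triple_upper P φ hA hB hC hs hAB hBC hAC).trans ?_
  simp only [← sum_mul]
  refine mul_le_mul_of_nonneg_right ?_ (by positivity)
  have hlag := hΛ (fun a => dens φ a A B) (fun a => dens_nonneg _ _ _ _) (dens_sum φ hA hB)
  have hterm : ∑ a, ∑ b, ∑ c, (ind (P a b c) * (dens φ a A B * dens φ b B C * dens φ c A C)
      + 3 * s) ≤ ∑ a, ∑ b, ∑ c, (ind (P a b c) * (dens φ a A B * dens φ b A B * dens φ c A B)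
        + (2 / N + 3 * s)) := by
    refine sum_le_sum fun a _ => sum_le_sum fun b _ => sum_le_sum fun c _ => ?_
    exact ind_near (P a b c) (dens_nonneg _ _ _ _) (dens_le_one _ _ hA hB)
      (dens_nonneg _ _ _ _) (dens_le_one _ _ hA hB) (dens_nonneg _ _ _ _)
      (dens_le_one _ _ hA hC) (n1 b) (n2 c) hN
  refine hterm.trans ?_
  have hsum : ∑ a, ∑ b, ∑ c, (ind (P a b c) * (dens φ a A B * dens φ b A B * dens φ c A B)
        + (2 / N + 3 * s)) =
      (∑ a, ∑ b, ∑ c, ind (P a b c) * (dens φ a A B * dens φ b A B * dens φ c A B))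
        + (Fintype.card κ : ℝ) ^ 3 * (2 / N + 3 * s) := by
    simp only [sum_add_distrib, sum_const, nsmul_eq_mul, card_univ]
    ring
  rw [hsum]
  linarith

lemma floor_near {N p q : ℝ} (hN : 0 < N) (hq : 0 ≤ q)
    (e : ⌊N * p⌋₊ = ⌊N * q⌋₊) : p - q ≤ 1 / N := by
  have h1 := Nat.lt_floor_add_one (N * p)
  have h2 := Nat.floor_le (mul_nonneg hN.le hq)
  rw [e] at h1
  rw [le_div_iff₀ hN]
  linarith

/-- A large ordered vertex set contains `t` consecutive blocks of comparable size. -/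
lemma exists_blocks (W : Finset ℕ) (ord : ℕ → ℕ) (hinj : Set.InjOn ord W) {t : ℕ} (ht : 0 < t)
    (hn : t ≤ #W) :
    ∃ B : Fin t → Finset ℕ, (∀ i, B i ⊆ W) ∧ (∀ i, (B i).Nonempty) ∧
      (∀ i, (#W : ℝ) ≤ 2 * t * #(B i)) ∧
      ∀ i j : Fin t, i < j → ∀ u ∈ B i, ∀ v ∈ B j, ord u < ord v := by
  set n := #W with hndef
  obtain ⟨g, hgV, hg⟩ := exists_enum W ord hinj
  set m := n / t with hm
  have hm1 : 1 ≤ m := (Nat.one_le_div_iff ht).mpr hn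
  have hmt : m * t ≤ n := Nat.div_mul_le_self n t
  have hm2 : (n : ℝ) ≤ 2 * t * m := by
    have : n < t * (m + 1) := Nat.lt_mul_div_succ n ht
    have : n ≤ 2 * t * m := by nlinarith
    exact_mod_cast this
  have hgne : ∀ r < n, ∀ r' < n, g r = g r' → r = r' := by
    intro r hr r' hr' e
    rcases lt_trichotomy r r' with h1 | h1 | h1
    · exact absurd (hg r r' h1 hr') (by simp [e])
    · exact h1
    · exact absurd (hg r' r h1 hr) (by simp [e])
  have hlt : ∀ i < t, ∀ r < (i + 1) * m, r < n := by
    intro i hi r hr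
    have : (i + 1) * m ≤ t * m := Nat.mul_le_mul_right m hi
    nlinarith
  -- consecutive blocks of `m` vertices in the vertex ordering
  let B : Fin t → Finset ℕ := fun i => (Ico ((i : ℕ) * m) (((i : ℕ) + 1) * m)).image g
  have hBcard : ∀ i, #(B i) = m := by
    intro i
    rw [card_image_of_injOn, Nat.card_Ico, add_mul, one_mul, Nat.add_sub_cancel_left]
    intro r hr r' hr' e
    simp only [coe_Ico, Set.mem_Ico] at hr hr'
    exact hgne r (hlt i i.2 r hr.2) r' (hlt i i.2 r' hr'.2) e
  have hBV : ∀ i, B i ⊆ W := by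
    intro i v hv
    obtain ⟨r, hr, rfl⟩ := mem_image.mp hv
    exact hgV r (hlt i i.2 r (mem_Ico.mp hr).2)
  have hBord : ∀ i j : Fin t, i < j → ∀ u ∈ B i, ∀ v ∈ B j, ord u < ord v := by
    intro i j hij u hu v hv
    obtain ⟨r, hr, rfl⟩ := mem_image.mp hu
    obtain ⟨r', hr', rfl⟩ := mem_image.mp hv
    rw [mem_Ico] at hr hr'
    refine hg r r' ?_ (hlt j j.2 r' hr'.2)
    have : ((i : ℕ) + 1) * m ≤ j * m := Nat.mul_le_mul_right m hij
    omega
  have hBne : ∀ i, (B i).Nonempty := fun i => card_pos.mp (by rw [hBcard]; exact hm1)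
  exact ⟨B, hBV, hBne, fun i => by rw [hBcard]; exact hm2, hBord⟩

/-- The density of a large dense 3-graph satisfying `P` is at most the maximum of the palette
polynomial on the simplex. -/
lemma dens_le_of_sat [Fintype κ] (P : κ → κ → κ → Prop) {Λ : ℝ}
    (hΛ : ∀ x : κ → ℝ, (∀ a, 0 ≤ x a) → ∑ a, x a = 1 →
      ∑ a, ∑ b, ∑ c, ind (P a b c) * (x a * x b * x c) ≤ Λ) {d : ℝ}
    (h : ∀ η : ℝ, 0 < η → ∀ n : ℕ, ∃ H : ThreeGraph, n ≤ #H.verts ∧ Sat P H ∧ IsDenseVVV H d η) :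
    d ≤ Λ := by
  refine le_of_forall_pos_le_add fun ε hε => ?_
  set K : ℝ := (Fintype.card κ : ℝ) ^ 3 with hK
  have hK0 : 0 ≤ K := by positivity
  obtain ⟨N, hN⟩ := exists_nat_gt (8 * (K + 1) / ε)
  have hN0 : (0 : ℝ) < N := lt_trans (by positivity) hN
  have hKN : K * (2 / N) ≤ ε / 4 := by
    rw [div_lt_iff₀ hε] at hN
    rw [mul_div_assoc', div_le_iff₀ hN0]
    linarith
  set s : ℝ := ε / (12 * (K + 1)) with hs
  have hs0 : 0 < s := by positivity
  have hKs : K * (3 * s) ≤ ε / 4 := by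
    rw [hs, mul_div_assoc', mul_div_assoc', div_le_iff₀ (by positivity)]
    nlinarith
  have hγ : 0 < s ^ 2 / 2 := by positivity
  have hsγ : √(2 * (s ^ 2 / 2)) = s := by
    rw [mul_div_cancel₀ _ (two_ne_zero), Real.sqrt_sq hs0.le]
  obtain ⟨t, ht, hram⟩ := ramsey (κ → Fin (N + 1))
  have ht' : (0 : ℝ) < t := by exact_mod_cast ht
  set c : ℝ := Real.exp (-(t ^ 2 / (s ^ 2 / 2))) / (2 * t) with hc
  have hc0 : 0 < c := by positivity
  obtain ⟨H, hn, ⟨ord, φ, hinj, hsat⟩, hdense⟩ := h (ε / 2 * c ^ 3) (by positivity) t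
  set n := #H.verts with hndef
  have hn0 : (0 : ℝ) < n := by exact_mod_cast ht.trans_le hn
  obtain ⟨B, hBV, hBne, hBbig, hBord⟩ := exists_blocks H.verts ord hinj ht hn
  obtain ⟨V, hVB, hVne, hVbig, hreg⟩ := regular_tuple φ hγ B hBne
  rw [hsγ] at hreg
  have hVc : ∀ i, c * n ≤ #(V i) := by
    intro i
    refine le_trans ?_ (hVbig i)
    rw [hc, div_mul_eq_mul_div, div_le_iff₀ (by positivity)]
    have := mul_le_mul_of_nonneg_left (hBbig i) (Real.exp_pos (-(t ^ 2 / (s ^ 2 / 2)) : ℝ)).le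
    linarith
  -- the pairs of blocks are coloured by their rounded colour densities
  have hfl : ∀ (a : κ) (i j : Fin t), ⌊(N : ℝ) * dens φ a (V i) (V j)⌋₊ < N + 1 := by
    intro a i j
    rw [Nat.lt_succ_iff]
    refine Nat.floor_le_of_le ?_
    have := dens_le_one φ a (hVne i) (hVne j)
    nlinarith
  obtain ⟨i, j, k, hij, hjk, hk, e1, e2⟩ := hram fun i j =>
    if hi : i < t then if hj : j < t then
      fun a => ⟨⌊(N : ℝ) * dens φ a (V ⟨i, hi⟩) (V ⟨j, hj⟩)⌋₊, hfl a _ _⟩ else 0 else 0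
  have hj := hjk.trans hk
  have hi := hij.trans hj
  simp only [hi, hj, hk, dif_pos] at e1 e2
  set A := V ⟨i, hi⟩ with hA
  set A' := V ⟨j, hj⟩ with hA'
  set A'' := V ⟨k, hk⟩ with hA''
  have n1 : ∀ a, dens φ a A' A'' - dens φ a A A' ≤ 1 / N := fun a =>
    floor_near hN0 (dens_nonneg _ _ _ _) (congrArg Fin.val (congrFun e1 a))
  have n2 : ∀ a, dens φ a A A'' - dens φ a A A' ≤ 1 / N := fun a =>
    floor_near hN0 (dens_nonneg _ _ _ _) (congrArg Fin.val (congrFun e2 a))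
  have hne := hVne ⟨i, hi⟩
  have hne' := hVne ⟨j, hj⟩
  have hne'' := hVne ⟨k, hk⟩
  have up := triple_lagrangian P hΛ φ hne hne' hne'' hs0.le
    (hreg _ _ hij) (hreg _ _ hjk) (hreg _ _ (hij.trans hjk)) hN0 n1 n2
  rw [← hK] at up
  have low := hdense A A' A'' ((hVB _).trans (hBV _)) ((hVB _).trans (hBV _))
    ((hVB _).trans (hBV _))
  have hle : (eVVV H A A' A'' : ℝ) ≤
      ∑ u ∈ A, ∑ v ∈ A', ∑ w ∈ A'', ind (P (φ u v) (φ v w) (φ u w)) := by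
    rw [eVVV_eq_sum]
    refine sum_le_sum fun u hu => sum_le_sum fun v hv => sum_le_sum fun w hw => ?_
    by_cases he : ({u, v, w} : Finset ℕ) ∈ H.edges
    · rw [ind_of (hsat u v w he (hBord _ _ hij u (hVB _ hu) v (hVB _ hv))
        (hBord _ _ hjk v (hVB _ hv) w (hVB _ hw)))]
      exact ind_le_one _
    · rw [ind_not he]
      exact ind_nonneg _
  have hcomp : c ^ 3 * (n : ℝ) ^ 3 ≤ #A * #A' * #A'' := by
    have h1 := hVc ⟨i, hi⟩
    have h2 := hVc ⟨j, hj⟩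
    have h3 := hVc ⟨k, hk⟩
    have hcn : 0 ≤ c * n := by positivity
    calc c ^ 3 * (n : ℝ) ^ 3 = (c * n) * (c * n) * (c * n) := by ring
      _ ≤ _ := by gcongr
  have hpos : (0 : ℝ) < #A * #A' * #A'' := lt_of_lt_of_le (by positivity) hcomp
  have hmain : d * (#A * #A' * #A'' : ℝ) ≤ (Λ + ε) * (#A * #A' * #A'') := by
    have h1 : Λ + K * (2 / N + 3 * s) ≤ Λ + ε / 2 := by linarith
    have h2 := mul_le_mul_of_nonneg_right h1 hpos.le
    have h3 := mul_le_mul_of_nonneg_left hcomp (by positivity : 0 ≤ ε / 2)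
    linarith
  exact le_of_mul_le_mul_right hmain hpos

end

/-! ### Quasirandom colourings -/

/-- A factor with mean zero that depends on one coordinate only, times a factor that ignores this
coordinate, sums to zero. -/
lemma sum_eq_zero_of_shift {J C : Type*} [Fintype J] [DecidableEq J] [Fintype C] [AddCommGroup C]
    (f : C → ℝ) (hf : ∑ c, f c = 0) (e : J) (G : (J → C) → ℝ)
    (hG : ∀ ω c, G (ω + Pi.single e c) = G ω) : ∑ ω, f (ω e) * G ω = 0 := by
  have h1 : ∀ c : C, ∑ ω, f (ω e) * G ω = ∑ ω, f (ω e + c) * G ω := fun c => by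
    rw [← Equiv.sum_comp (Equiv.addRight (Pi.single e c : J → C))]
    refine sum_congr rfl fun ω _ => ?_
    simp [hG]
  have h2 : ∑ c : C, ∑ ω : J → C, f (ω e + c) * G ω = 0 := by
    rw [sum_comm]
    refine sum_eq_zero fun ω _ => ?_
    have h3 := Equiv.sum_comp (Equiv.addLeft (ω e)) f
    simp only [Equiv.coe_addLeft] at h3
    rw [← sum_mul, h3, hf, zero_mul]
  rw [← sum_congr rfl fun c _ => h1 c, sum_const, nsmul_eq_mul] at h2
  have hC : ((#(univ : Finset C) : ℕ) : ℝ) ≠ 0 := by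
    have : 0 < #(univ : Finset C) := card_pos.mpr ⟨0, mem_univ _⟩
    exact_mod_cast this.ne'
  exact (mul_eq_zero.mp h2).resolve_left hC

section
variable {I C : Type*} [Fintype C] [AddCommGroup C]

/-- The deviation of the indicator of colour `a`, on the pairs satisfying `R`. -/
noncomputable def dev (R : I → I → Prop) (a : C) (ω : I × I → C) (u v : I) : ℝ :=
  ind (R u v) * (ind (ω (u, v) = a) - 1 / Fintype.card C)

lemma abs_dev_le (R : I → I → Prop) (a : C) (ω : I × I → C) (u v : I) : |dev R a ω u v| ≤ 1 := by
  unfold dev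
  have hC : (1 : ℝ) ≤ Fintype.card C := by exact_mod_cast Fintype.card_pos
  have h1 : 1 / (Fintype.card C : ℝ) ≤ 1 := (div_le_one (by linarith)).mpr hC
  have h2 : 0 ≤ 1 / (Fintype.card C : ℝ) := by positivity
  rw [abs_mul, abs_of_nonneg (ind_nonneg _)]
  refine mul_le_one₀ (ind_le_one _) (abs_nonneg _) (abs_le.mpr ⟨?_, ?_⟩)
  · linarith [ind_nonneg (ω (u, v) = a)]
  · linarith [ind_le_one (ω (u, v) = a)]

variable [Fintype I]

/-- Second moment of codegrees: the number of `4`-cycles, weighted by the deviations. -/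
noncomputable def cyc (R : I → I → Prop) (a : C) (ω : I × I → C) : ℝ :=
  ∑ u, ∑ u', (∑ v, dev R a ω u v * dev R a ω u' v) ^ 2

lemma sum_dev_four (R : I → I → Prop) (a : C) {u u' v v' : I} (hu : u ≠ u') (hv : v ≠ v') :
    ∑ ω : I × I → C, dev R a ω u v * dev R a ω u' v * (dev R a ω u v' * dev R a ω u' v') = 0 := by
  have h := sum_eq_zero_of_shift (J := I × I) (C := C)
    (fun c => ind (R u v) * (ind (c = a) - 1 / Fintype.card C)) ?_ (u, v)
    (fun ω => dev R a ω u' v * (dev R a ω u v' * dev R a ω u' v')) ?_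
  · rw [← h]
    refine sum_congr rfl fun ω _ => ?_
    rw [mul_assoc]
    rfl
  · rw [← mul_sum, sum_sub_distrib]
    have hC : (Fintype.card C : ℝ) ≠ 0 := by
      exact_mod_cast Fintype.card_ne_zero
    simp [ind, hC]
  · intro ω c
    simp [dev, Pi.add_apply, hu.symm, hv.symm]

lemma sum_cyc_le (R : I → I → Prop) (a : C) :
    ∑ ω : I × I → C, cyc R a ω ≤
      Fintype.card (I × I → C) * (2 * (Fintype.card I : ℝ) ^ 3) := by
  have h1 : ∀ ω : I × I → C, cyc R a ω = ∑ u, ∑ u', ∑ v, ∑ v',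
      dev R a ω u v * dev R a ω u' v * (dev R a ω u v' * dev R a ω u' v') := fun ω => by
    unfold cyc
    simp only [sq, sum_mul_sum]
  have h2 : ∑ ω : I × I → C, cyc R a ω = ∑ u, ∑ u', ∑ v, ∑ v', ∑ ω : I × I → C,
      dev R a ω u v * dev R a ω u' v * (dev R a ω u v' * dev R a ω u' v') := by
    simp only [h1]
    rw [sum_comm]; refine sum_congr rfl fun u _ => ?_
    rw [sum_comm]; refine sum_congr rfl fun u' _ => ?_
    rw [sum_comm]; refine sum_congr rfl fun v _ => ?_
    rw [sum_comm]
  set Q : ℝ := (Fintype.card (I × I → C) : ℝ) with hQ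
  have h3 : ∀ u u' v v' : I, ∑ ω : I × I → C,
      dev R a ω u v * dev R a ω u' v * (dev R a ω u v' * dev R a ω u' v') ≤
      Q * (ind (u = u') + ind (v = v')) := by
    intro u u' v v'
    have bd : ∑ ω : I × I → C,
      dev R a ω u v * dev R a ω u' v * (dev R a ω u v' * dev R a ω u' v') ≤ Q * 1 := by
      rw [hQ, ← card_univ, ← nsmul_eq_mul]
      refine sum_le_card_nsmul _ _ _ fun ω _ => (le_abs_self _).trans ?_
      simp only [abs_mul]
      have := abs_dev_le R a ω
      exact mul_le_one₀ (mul_le_one₀ (this _ _) (abs_nonneg _) (this _ _)) (by positivity)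
        (mul_le_one₀ (this _ _) (abs_nonneg _) (this _ _))
    have hQ0 : 0 ≤ Q := by positivity
    by_cases hu : u = u'
    · refine bd.trans (mul_le_mul_of_nonneg_left ?_ hQ0)
      rw [ind_of hu]; linarith [ind_nonneg (v = v')]
    · by_cases hv : v = v'
      · refine bd.trans (mul_le_mul_of_nonneg_left ?_ hQ0)
        rw [ind_of hv]; linarith [ind_nonneg (u = u')]
      · rw [sum_dev_four R a hu hv, ind_not hu, ind_not hv]; simp
  rw [h2]
  calc _ ≤ ∑ u : I, ∑ u' : I, ∑ v : I, ∑ v' : I, Q * (ind (u = u') + ind (v = v')) :=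
        sum_le_sum fun u _ => sum_le_sum fun u' _ => sum_le_sum fun v _ => sum_le_sum fun v' _ =>
          h3 u u' v v'
    _ = _ := by
        simp only [← mul_sum, sum_add_distrib, sum_const, nsmul_eq_mul, card_univ]
        have : ∀ u : I, ∑ u', ind (u = u') = 1 := fun u => by simp [ind]
        simp only [this, sum_const, nsmul_eq_mul, card_univ]
        ring

/-- Some colouring has few weighted `4`-cycles in every colour. -/
lemma exists_cyc_le (R : I → I → Prop) : ∃ ω : I × I → C, ∀ a : C,
    cyc R a ω ≤ 2 * Fintype.card C * (Fintype.card I : ℝ) ^ 3 := by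
  have hcyc : ∀ (a : C) (ω : I × I → C), 0 ≤ cyc R a ω := fun a ω =>
    sum_nonneg fun _ _ => sum_nonneg fun _ _ => sq_nonneg _
  obtain ⟨ω, -, hω⟩ := exists_le_of_sum_le (s := (univ : Finset (I × I → C)))
    (f := fun ω => ∑ a : C, cyc R a ω)
    (g := fun _ => 2 * Fintype.card C * (Fintype.card I : ℝ) ^ 3) ⟨fun _ => 0, mem_univ _⟩ (by
      rw [sum_comm]
      refine (sum_le_sum fun a _ => sum_cyc_le R a).trans_eq ?_
      simp only [sum_const, nsmul_eq_mul, card_univ]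
      ring)
  exact ⟨ω, fun a => (single_le_sum (fun a _ => hcyc a ω) (mem_univ a)).trans hω⟩

end

/-- The cut norm is controlled by the codegree second moment (Cauchy-Schwarz twice). -/
lemma cut_pow_four {I : Type*} [Fintype I] (D : I → I → ℝ) (S T : Finset I) :
    (∑ u ∈ S, ∑ v ∈ T, D u v) ^ 4 ≤
      (Fintype.card I : ℝ) ^ 4 * ∑ u, ∑ u', (∑ v, D u v * D u' v) ^ 2 := by
  set n : ℝ := (Fintype.card I : ℝ) with hn
  have hS : (#S : ℝ) ≤ n := Nat.cast_le.mpr (card_le_univ _)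
  have hT : (#T : ℝ) ≤ n := Nat.cast_le.mpr (card_le_univ _)
  have hn0 : 0 ≤ n := by positivity
  have h1 : (∑ u ∈ S, ∑ v ∈ T, D u v) ^ 2 ≤ n * ∑ v, (∑ u ∈ S, D u v) ^ 2 := by
    rw [sum_comm]
    refine sq_sum_le_card_mul_sum_sq.trans ?_
    exact mul_le_mul hT (sum_le_sum_of_subset_of_nonneg (subset_univ _)
      fun _ _ _ => sq_nonneg _) (sum_nonneg fun _ _ => sq_nonneg _) hn0
  have h2 : ∑ v, (∑ u ∈ S, D u v) ^ 2 = ∑ p ∈ S ×ˢ S, ∑ v, D p.1 v * D p.2 v := by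
    simp only [sq, sum_mul_sum]
    rw [sum_product, sum_comm]
    refine sum_congr rfl fun u _ => ?_
    rw [sum_comm]
  have h3 : (∑ p ∈ S ×ˢ S, ∑ v, D p.1 v * D p.2 v) ^ 2 ≤
      n ^ 2 * ∑ u, ∑ u', (∑ v, D u v * D u' v) ^ 2 := by
    refine sq_sum_le_card_mul_sum_sq.trans ?_
    rw [← Fintype.sum_prod_type' (f := fun u u' => (∑ v, D u v * D u' v) ^ 2)]
    refine mul_le_mul ?_ (sum_le_sum_of_subset_of_nonneg (subset_univ _)
      fun _ _ _ => sq_nonneg _) (sum_nonneg fun _ _ => sq_nonneg _) (by positivity)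
    rw [card_product, sq]
    push_cast
    gcongr
  have h0 : 0 ≤ ∑ v, (∑ u ∈ S, D u v) ^ 2 := sum_nonneg fun _ _ => sq_nonneg _
  calc (∑ u ∈ S, ∑ v ∈ T, D u v) ^ 4 = ((∑ u ∈ S, ∑ v ∈ T, D u v) ^ 2) ^ 2 := by ring
    _ ≤ (n * ∑ v, (∑ u ∈ S, D u v) ^ 2) ^ 2 := pow_le_pow_left₀ (sq_nonneg _) h1 2
    _ = n ^ 2 * (∑ p ∈ S ×ˢ S, ∑ v, D p.1 v * D p.2 v) ^ 2 := by rw [h2]; ring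
    _ ≤ n ^ 2 * (n ^ 2 * ∑ u, ∑ u', (∑ v, D u v * D u' v) ^ 2) :=
        mul_le_mul_of_nonneg_left h3 (by positivity)
    _ = _ := by ring

/-- For large `N` there is a colouring of `range N` in which every colour class, restricted to
the pairs `u < v`, is a quasirandom part of `<`. -/
lemma exists_colouring (C : Type*) [Fintype C] [AddCommGroup C] {δ : ℝ} (hδ : 0 < δ) (n : ℕ) :
    ∃ N : ℕ, n ≤ N ∧ ∃ φ : ℕ → ℕ → C, ∀ a : C, ∀ S ⊆ range N, ∀ T ⊆ range N,
      |∑ u ∈ S, ∑ v ∈ T, (ind (u < v ∧ φ u v = a) - 1 / (Fintype.card C : ℝ) * ind (u < v))|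
        ≤ δ * (N : ℝ) ^ 2 := by
  obtain ⟨k, hk⟩ := exists_nat_gt (2 * Fintype.card C / δ ^ 4)
  set N := max n k + 1 with hN
  obtain ⟨ω, hω⟩ := exists_cyc_le (I := Fin N) (C := C) (fun u v => u < v)
  refine ⟨N, by omega, fun u v => ω (Fin.ofNat N u, Fin.ofNat N v), fun a S hS T hT => ?_⟩
  have hlift : ∀ (S : Finset ℕ) (_ : S ⊆ range N) (f : ℕ → ℝ), ∑ u ∈ S, f u =
      ∑ u ∈ (univ : Finset (Fin N)).filter (fun u : Fin N => (u : ℕ) ∈ S), f u := by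
    intro S hS f
    symm
    refine sum_bij (fun u _ => (u : ℕ)) (fun u hu => (mem_filter.mp hu).2)
      (fun u _ v _ h => Fin.val_injective h) (fun u hu => ?_) (fun _ _ => rfl)
    exact ⟨⟨u, mem_range.mp (hS hu)⟩, by simp [hu], rfl⟩
  rw [hlift S hS]
  simp only [hlift T hT]
  have e : ∀ u v : Fin N, ind ((u : ℕ) < v ∧ ω (Fin.ofNat N u, Fin.ofNat N v) = a) -
      1 / (Fintype.card C : ℝ) * ind ((u : ℕ) < v) = dev (fun u v => u < v) a ω u v := by
    intro u v
    rw [ind_and]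
    simp only [dev, Fin.ofNat_eq_cast, Fin.cast_val_eq_self, Fin.val_fin_lt]
    ring
  simp only [e]
  have h := (cut_pow_four (dev (fun u v => u < v) a ω)
    (univ.filter (fun u : Fin N => (u : ℕ) ∈ S)) (univ.filter (fun u : Fin N => (u : ℕ) ∈ T))).trans
    (mul_le_mul_of_nonneg_left (hω a) (by positivity))
  have hN0 : (0 : ℝ) < N := by exact_mod_cast Nat.succ_pos _
  have hkN : (k : ℝ) ≤ N := by exact_mod_cast (le_max_right n k).trans (Nat.le_succ _)
  rw [div_lt_iff₀ (by positivity)] at hk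
  have hC : 2 * (Fintype.card C : ℝ) ≤ δ ^ 4 * N := by
    have := mul_le_mul_of_nonneg_right hkN (by positivity : 0 ≤ δ ^ 4)
    linarith
  refine le_of_pow_le_pow_left₀ (n := 4) (by norm_num) (by positivity) ?_
  rw [Even.pow_abs (by decide)]
  refine h.trans ?_
  rw [Fintype.card_fin]
  calc (N : ℝ) ^ 4 * (2 * Fintype.card C * (N : ℝ) ^ 3) ≤ (N : ℝ) ^ 4 * (δ ^ 4 * N * (N : ℝ) ^ 3) := by
        gcongr
    _ = _ := by ring

/-! ### The lower bound, and the density of the family of a palette -/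

/-- The indicator of `u < v < w`. -/
noncomputable def inc (u v w : ℕ) : ℝ := ind (u < v) * ind (v < w) * ind (u < w)

lemma inc_nonneg (u v w : ℕ) : 0 ≤ inc u v w :=
  mul_nonneg (mul_nonneg (ind_nonneg _) (ind_nonneg _)) (ind_nonneg _)

lemma inc_of {u v w : ℕ} (h : u < v) (h' : v < w) : inc u v w = 1 := by
  simp [inc, ind, h, h', h.trans h']

lemma inc_not {u v w : ℕ} (h : ¬ (u < v ∧ v < w)) : inc u v w = 0 := by
  unfold inc
  rw [← ind_and, ind_not h, zero_mul]

/-- The sum of `F` over the six orders of a triple. -/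
def sixfold (F : ℕ → ℕ → ℕ → ℝ) (x y z : ℕ) : ℝ :=
  F x y z + F x z y + F y x z + F y z x + F z x y + F z y x

lemma sixfold_inc (f : ℕ → ℕ → ℕ → ℝ) {x y z : ℕ} {r : ℝ} (hr : 0 ≤ r)
    (h : ∀ u v w, u < v → v < w → ({u, v, w} : Finset ℕ) = {x, y, z} → f u v w ≤ r) :
    sixfold (fun u v w => f u v w * inc u v w) x y z ≤ r := by
  have e1 : ({x, z, y} : Finset ℕ) = {x, y, z} := by ext; simp; tauto
  have e2 : ({y, x, z} : Finset ℕ) = {x, y, z} := by ext; simp; tauto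
  have e3 : ({y, z, x} : Finset ℕ) = {x, y, z} := by ext; simp; tauto
  have e4 : ({z, x, y} : Finset ℕ) = {x, y, z} := by ext; simp; tauto
  have e5 : ({z, y, x} : Finset ℕ) = {x, y, z} := by ext; simp; tauto
  have h0 := fun a b => h x y z a b rfl
  have h1 := fun a b => h x z y a b e1
  have h2 := fun a b => h y x z a b e2
  have h3 := fun a b => h y z x a b e3
  have h4 := fun a b => h z x y a b e4
  have h5 := fun a b => h z y x a b e5
  simp only [sixfold]
  by_cases c0 : x < y ∧ y < z
  · rw [inc_of c0.1 c0.2, inc_not (u := x) (v := z) (by omega), inc_not (u := y) (v := x) (by omega),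
      inc_not (u := y) (v := z) (by omega), inc_not (u := z) (v := x) (by omega),
      inc_not (u := z) (v := y) (by omega)]
    linarith [h0 c0.1 c0.2]
  by_cases c1 : x < z ∧ z < y
  · rw [inc_not c0, inc_of c1.1 c1.2, inc_not (u := y) (v := x) (by omega),
      inc_not (u := y) (v := z) (by omega), inc_not (u := z) (v := x) (by omega),
      inc_not (u := z) (v := y) (by omega)]
    linarith [h1 c1.1 c1.2]
  by_cases c2 : y < x ∧ x < z
  · rw [inc_not c0, inc_not c1, inc_of c2.1 c2.2,
      inc_not (u := y) (v := z) (by omega), inc_not (u := z) (v := x) (by omega),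
      inc_not (u := z) (v := y) (by omega)]
    linarith [h2 c2.1 c2.2]
  by_cases c3 : y < z ∧ z < x
  · rw [inc_not c0, inc_not c1, inc_not c2, inc_of c3.1 c3.2,
      inc_not (u := z) (v := x) (by omega), inc_not (u := z) (v := y) (by omega)]
    linarith [h3 c3.1 c3.2]
  by_cases c4 : z < x ∧ x < y
  · rw [inc_not c0, inc_not c1, inc_not c2, inc_not c3, inc_of c4.1 c4.2,
      inc_not (u := z) (v := y) (by omega)]
    linarith [h4 c4.1 c4.2]
  by_cases c5 : z < y ∧ y < x
  · rw [inc_not c0, inc_not c1, inc_not c2, inc_not c3, inc_not c4, inc_of c5.1 c5.2]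
    linarith [h5 c5.1 c5.2]
  rw [inc_not c0, inc_not c1, inc_not c2, inc_not c3, inc_not c4, inc_not c5]
  linarith

lemma one_le_sixfold (x y z : ℕ) :
    1 ≤ sixfold inc x y z + (ind (x = y) + ind (y = z) + ind (x = z)) := by
  have a := inc_nonneg x y z
  have b := inc_nonneg x z y
  have c := inc_nonneg y x z
  have d := inc_nonneg y z x
  have e := inc_nonneg z x y
  have f := inc_nonneg z y x
  have g := ind_nonneg (x = y)
  have h := ind_nonneg (y = z)
  have i := ind_nonneg (x = z)
  simp only [sixfold]
  by_cases h1 : x = y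
  · linarith [ind_of h1]
  by_cases h2 : y = z
  · linarith [ind_of h2]
  by_cases h3 : x = z
  · linarith [ind_of h3]
  rcases lt_or_gt_of_ne h1 with h1 | h1 <;> rcases lt_or_gt_of_ne h2 with h2 | h2 <;>
    rcases lt_or_gt_of_ne h3 with h3 | h3
  · linarith [inc_of h1 h2]
  · omega
  · linarith [inc_of h3 h2]
  · linarith [inc_of h3 h1]
  · linarith [inc_of h1 h3]
  · linarith [inc_of h2 h3]
  · omega
  · linarith [inc_of h2 h1]

/-- The sum of `F` over `X × Y × Z`. -/
noncomputable def tsum3 (F : ℕ → ℕ → ℕ → ℝ) (X Y Z : Finset ℕ) : ℝ :=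
  ∑ x ∈ X, ∑ y ∈ Y, ∑ z ∈ Z, F x y z

lemma tsum3_sixfold (F : ℕ → ℕ → ℕ → ℝ) (X Y Z : Finset ℕ) :
    tsum3 (sixfold F) X Y Z = tsum3 F X Y Z + tsum3 F X Z Y + tsum3 F Y X Z + tsum3 F Y Z X +
      tsum3 F Z X Y + tsum3 F Z Y X := by
  simp only [tsum3, sixfold, sum_add_distrib]
  have e1 : ∑ x ∈ X, ∑ y ∈ Y, ∑ z ∈ Z, F x z y = ∑ x ∈ X, ∑ z ∈ Z, ∑ y ∈ Y, F x z y :=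
    sum_congr rfl fun x _ => sum_comm
  have e2 : ∑ x ∈ X, ∑ y ∈ Y, ∑ z ∈ Z, F y x z = ∑ y ∈ Y, ∑ x ∈ X, ∑ z ∈ Z, F y x z := sum_comm
  have e3 : ∑ x ∈ X, ∑ y ∈ Y, ∑ z ∈ Z, F y z x = ∑ y ∈ Y, ∑ z ∈ Z, ∑ x ∈ X, F y z x := by
    rw [sum_comm]; exact sum_congr rfl fun y _ => sum_comm
  have e4 : ∑ x ∈ X, ∑ y ∈ Y, ∑ z ∈ Z, F z x y = ∑ z ∈ Z, ∑ x ∈ X, ∑ y ∈ Y, F z x y := by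
    rw [sum_comm (s := Z)]; exact sum_congr rfl fun x _ => sum_comm
  have e5 : ∑ x ∈ X, ∑ y ∈ Y, ∑ z ∈ Z, F z y x = ∑ z ∈ Z, ∑ y ∈ Y, ∑ x ∈ X, F z y x := by
    rw [sum_congr rfl fun x _ => sum_comm, sum_comm]
    exact sum_congr rfl fun z _ => sum_comm
  rw [e1, e2, e3, e4, e5]

section
variable {C : Type*} [Fintype C]

/-- The proportion of triples of colours that belong to the palette `P`. -/
noncomputable def pdens (P : C → C → C → Prop) : ℝ :=
  (∑ a, ∑ b, ∑ c, ind (P a b c)) / (Fintype.card C : ℝ) ^ 3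

lemma pdens_nonneg (P : C → C → C → Prop) : 0 ≤ pdens P :=
  div_nonneg (sum_nonneg fun _ _ => sum_nonneg fun _ _ => sum_nonneg fun _ _ => ind_nonneg _)
    (by positivity)

lemma pdens_le_one (P : C → C → C → Prop) : pdens P ≤ 1 := by
  refine div_le_one_of_le₀ ?_ (by positivity)
  calc _ ≤ ∑ _a : C, ∑ _b : C, ∑ _c : C, (1 : ℝ) :=
        sum_le_sum fun _ _ => sum_le_sum fun _ _ => sum_le_sum fun _ _ => ind_le_one _
    _ = _ := by simp only [sum_const, nsmul_eq_mul, card_univ]; ring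

/-- In a quasirandom colouring, a proportion `pdens P` of the increasing triples is in `P`. -/
lemma increasing_count (P : C → C → C → Prop) (φ : ℕ → ℕ → C) {N : ℕ} {e : ℝ}
    (hφ : ∀ a : C, ∀ S ⊆ range N, ∀ T ⊆ range N,
      |∑ u ∈ S, ∑ v ∈ T, (ind (u < v ∧ φ u v = a) - 1 / (Fintype.card C : ℝ) * ind (u < v))| ≤ e)
    {X Y Z : Finset ℕ} (hX : X ⊆ range N) (hY : Y ⊆ range N) (hZ : Z ⊆ range N) :
    pdens P * tsum3 inc X Y Z - (Fintype.card C : ℝ) ^ 3 * (3 * e * N) ≤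
      tsum3 (fun u v w => ind (P (φ u v) (φ v w) (φ u w)) * inc u v w) X Y Z := by
  set M : ℝ := (Fintype.card C : ℝ) with hM
  have he : 0 ≤ e ∨ IsEmpty C := by
    rcases isEmpty_or_nonempty C with h | ⟨⟨a⟩⟩
    · exact Or.inr h
    · exact Or.inl ((abs_nonneg _).trans (hφ a X hX Y hY))
  have hcard : ∀ {S : Finset ℕ}, S ⊆ range N → (#S : ℝ) ≤ N := fun {S} hS => by
    have := card_le_card hS
    rw [card_range] at this
    exact_mod_cast this
  unfold tsum3
  rw [sum_palette P X Y Z φ φ φ inc]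
  have h1M : 0 ≤ 1 / M ∧ 1 / M ≤ 1 := by
    refine ⟨by positivity, ?_⟩
    rcases Nat.eq_zero_or_pos (Fintype.card C) with h | h
    · simp [hM, h]
    · have : (1 : ℝ) ≤ M := by rw [hM]; exact_mod_cast h
      exact (div_le_one (by linarith)).mpr this
  have main : ∀ a b c : C, ind (P a b c) * ((1 / M) ^ 3 * ∑ x ∈ X, ∑ y ∈ Y, ∑ z ∈ Z, inc x y z)
      - 3 * e * N ≤ ind (P a b c) * ∑ u ∈ X, ∑ v ∈ Y, ∑ w ∈ Z,
        ind (φ u v = a) * ind (φ v w = b) * ind (φ u w = c) * inc u v w := by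
    intro a b c
    have he : 0 ≤ e := he.resolve_right (not_isEmpty_of_nonempty (h := ⟨a⟩))
    have h := count X Y Z (fun u v => u < v ∧ φ u v = a) (fun u v => u < v)
      (fun u v => u < v ∧ φ u v = b) (fun u v => u < v)
      (fun u v => u < v ∧ φ u v = c) (fun u v => u < v) (1 / M) (1 / M) (1 / M) e e e
      h1M.1 h1M.2 h1M.1 h1M.2
      (fun S hS T hT => hφ a S (hS.trans hX) T (hT.trans hY))
      (fun S hS T hT => hφ b S (hS.trans hY) T (hT.trans hZ))
      (fun S hS T hT => hφ c S (hS.trans hX) T (hT.trans hZ))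
    have h' := (abs_le.mp h).1
    have e1 : ∑ u ∈ X, ∑ v ∈ Y, ∑ w ∈ Z, (ind (u < v ∧ φ u v = a) * ind (v < w ∧ φ v w = b)
        * ind (u < w ∧ φ u w = c) - 1 / M * (1 / M) * (1 / M) *
          (ind (u < v) * ind (v < w) * ind (u < w))) =
        (∑ u ∈ X, ∑ v ∈ Y, ∑ w ∈ Z, ind (φ u v = a) * ind (φ v w = b) * ind (φ u w = c)
          * inc u v w) - (1 / M) ^ 3 * ∑ x ∈ X, ∑ y ∈ Y, ∑ z ∈ Z, inc x y z := by
      simp only [mul_sum, ← sum_sub_distrib, ind_and, inc]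
      refine sum_congr rfl fun u _ => sum_congr rfl fun v _ => sum_congr rfl fun w _ => ?_
      ring
    rw [e1] at h'
    have hb : e * #Z + e * #X + e * #Y ≤ 3 * e * N := by
      have := mul_le_mul_of_nonneg_left (hcard hX) he
      have := mul_le_mul_of_nonneg_left (hcard hY) he
      have := mul_le_mul_of_nonneg_left (hcard hZ) he
      linarith
    by_cases hp : P a b c
    · rw [ind_of hp]; linarith
    · have : 0 ≤ 3 * e * N := by positivity
      rw [ind_not hp]; linarith
  refine le_trans (le_of_eq ?_) (sum_le_sum fun a _ => sum_le_sum fun b _ => sum_le_sum fun c _ =>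
    main a b c)
  simp only [sum_sub_distrib, ← sum_mul, sum_const, nsmul_eq_mul, card_univ, pdens, ← hM]
  ring

end

/-- A quasirandom colouring of the pairs yields large dense 3-graphs satisfying `P`. -/
lemma exists_dense {C : Type*} [Fintype C] [AddCommGroup C] (P : C → C → C → Prop) {η : ℝ}
    (hη : 0 < η) (n : ℕ) :
    ∃ H : ThreeGraph, n ≤ #H.verts ∧ Sat P H ∧ IsDenseVVV H (pdens P) η := by
  set M : ℝ := (Fintype.card C : ℝ) with hM
  have hM0 : 0 < M := by rw [hM]; exact_mod_cast Fintype.card_pos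
  obtain ⟨k, hk⟩ := exists_nat_gt (6 / η)
  obtain ⟨N, hN, φ, hφ⟩ := exists_colouring C (δ := η / (36 * M ^ 3)) (by positivity) (max n k)
  let H : ThreeGraph :=
    { verts := range N
      edges := ((range N).powersetCard 3).filter fun e => ∃ u v w, u < v ∧ v < w ∧
        e = {u, v, w} ∧ P (φ u v) (φ v w) (φ u w)
      edge_sub := fun e he => (mem_powersetCard.mp (mem_filter.mp he).1).1
      edge_card := fun e he => (mem_powersetCard.mp (mem_filter.mp he).1).2 }
  refine ⟨H, ?_, ⟨id, φ, Set.injOn_id _, ?_⟩, ?_⟩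
  · simp only [H, card_range]
    exact (le_max_left _ _).trans hN
  · intro u v w he huv hvw
    obtain ⟨u', v', w', h1, h2, h3, h4⟩ := (mem_filter.mp he).2
    simp only [id] at huv hvw
    have m := fun t => Finset.ext_iff.mp h3 t
    simp only [mem_insert, mem_singleton] at m
    have a := m u
    have b := m v
    have c := m w
    have a' := m u'
    have b' := m v'
    have c' := m w'
    have hu : u = u' := by omega
    have hw : w = w' := by omega
    have hv : v = v' := by omega
    rw [hu, hv, hw]
    exact h4
  · intro X Y Z hX hY hZ
    have hX' : X ⊆ range N := hX
    have hY' : Y ⊆ range N := hY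
    have hZ' : Z ⊆ range N := hZ
    have hverts : (#H.verts : ℝ) = N := by simp [H]
    rw [hverts, eVVV_eq_sum, ge_iff_le]
    set e := η / (36 * M ^ 3) * (N : ℝ) ^ 2 with he
    have hMe : M ^ 3 * (3 * e * N) = η / 12 * (N : ℝ) ^ 3 := by
      rw [he]; field_simp; ring
    set t := fun u v w => ind (P (φ u v) (φ v w) (φ u w)) * inc u v w with ht
    have hc := @increasing_count C _ P φ N e hφ
    rw [← hM, hMe] at hc
    have hedge : tsum3 (sixfold t) X Y Z ≤
        ∑ x ∈ X, ∑ y ∈ Y, ∑ z ∈ Z, ind (({x, y, z} : Finset ℕ) ∈ H.edges) := by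
      refine sum_le_sum fun x hx => sum_le_sum fun y hy => sum_le_sum fun z hz => ?_
      refine sixfold_inc (fun u v w => ind (P (φ u v) (φ v w) (φ u w))) (ind_nonneg _)
        fun u v w huv hvw huvw => ?_
      by_cases hp : P (φ u v) (φ v w) (φ u w)
      · rw [ind_of hp, ind_of]
        refine mem_filter.mpr ⟨mem_powersetCard.mpr ⟨?_, ?_⟩, u, v, w, huv, hvw, huvw.symm, hp⟩
        · intro t ht
          simp only [mem_insert, mem_singleton] at ht
          rcases ht with rfl | rfl | rfl
          exacts [hX' hx, hY' hy, hZ' hz]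
        · rw [← huvw, card_eq_three]
          exact ⟨u, v, w, huv.ne, (huv.trans hvw).ne, hvw.ne, rfl⟩
      · rw [ind_not hp]; exact ind_nonneg _
    have hsix : pdens P * tsum3 (sixfold inc) X Y Z - η / 2 * (N : ℝ) ^ 3 ≤
        tsum3 (sixfold t) X Y Z := by
      rw [tsum3_sixfold, tsum3_sixfold]
      have := hc hX' hY' hZ'
      have := hc hX' hZ' hY'
      have := hc hY' hX' hZ'
      have := hc hY' hZ' hX'
      have := hc hZ' hX' hY'
      have := hc hZ' hY' hX'
      linarith
    have hcard : ∀ {S : Finset ℕ}, S ⊆ range N → (#S : ℝ) ≤ N := fun {S} hS => by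
      have := card_le_card hS
      rw [card_range] at this
      exact_mod_cast this
    -- degenerate triples contribute at most `3 N ^ 2`
    have hdeg : (#X * #Y * #Z : ℝ) ≤ tsum3 (sixfold inc) X Y Z + 3 * (N : ℝ) ^ 2 := by
      have d1 : ∀ (S : Finset ℕ) (x : ℕ), ∑ y ∈ S, ind (x = y) ≤ 1 := fun S x => by
        refine (sum_le_sum_of_subset_of_nonneg (subset_insert x S)
          fun _ _ _ => ind_nonneg _).trans ?_
        rw [sum_eq_single_of_mem x (mem_insert_self x S) fun y _ hy => ind_not hy.symm]
        exact ind_le_one _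
      have q1 : ∑ x ∈ X, ∑ y ∈ Y, ∑ z ∈ Z, ind (x = y) ≤ (N : ℝ) ^ 2 := by
        calc _ = ∑ x ∈ X, #Z * ∑ y ∈ Y, ind (x = y) := by
              simp only [sum_const, nsmul_eq_mul, mul_sum]
          _ ≤ ∑ x ∈ X, (#Z : ℝ) * 1 :=
              sum_le_sum fun x _ => mul_le_mul_of_nonneg_left (d1 _ _) (by positivity)
          _ = #X * #Z := by simp
          _ ≤ N * N := mul_le_mul (hcard hX') (hcard hZ') (by positivity) (by positivity)
          _ = _ := (sq _).symm
      have q2 : ∑ x ∈ X, ∑ y ∈ Y, ∑ z ∈ Z, ind (y = z) ≤ (N : ℝ) ^ 2 := by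
        calc _ ≤ ∑ x ∈ X, ∑ y ∈ Y, (1 : ℝ) := sum_le_sum fun x _ => sum_le_sum fun y _ => d1 _ _
          _ = #X * #Y := by simp
          _ ≤ N * N := mul_le_mul (hcard hX') (hcard hY') (by positivity) (by positivity)
          _ = _ := (sq _).symm
      have q3 : ∑ x ∈ X, ∑ y ∈ Y, ∑ z ∈ Z, ind (x = z) ≤ (N : ℝ) ^ 2 := by
        calc _ ≤ ∑ x ∈ X, ∑ y ∈ Y, (1 : ℝ) := sum_le_sum fun x _ => sum_le_sum fun y _ => d1 _ _
          _ = #X * #Y := by simp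
          _ ≤ N * N := mul_le_mul (hcard hX') (hcard hY') (by positivity) (by positivity)
          _ = _ := (sq _).symm
      have h1 : ∑ x ∈ X, ∑ y ∈ Y, ∑ z ∈ Z, (1 : ℝ) ≤ ∑ x ∈ X, ∑ y ∈ Y, ∑ z ∈ Z,
          (sixfold inc x y z + (ind (x = y) + ind (y = z) + ind (x = z))) :=
        sum_le_sum fun x _ => sum_le_sum fun y _ => sum_le_sum fun z _ => one_le_sixfold x y z
      simp only [sum_add_distrib] at h1
      have h2 : ∑ x ∈ X, ∑ y ∈ Y, ∑ z ∈ Z, (1 : ℝ) = #X * #Y * #Z := by simp [mul_assoc]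
      unfold tsum3
      linarith
    have hρ0 := pdens_nonneg P
    have hρ1 := pdens_le_one P
    have hkN : 3 * (N : ℝ) ^ 2 ≤ η / 2 * (N : ℝ) ^ 3 := by
      have hk' : (k : ℝ) ≤ N := by exact_mod_cast (le_max_right n k).trans hN
      rw [div_lt_iff₀ hη] at hk
      have : 6 ≤ η * N := by nlinarith
      nlinarith [sq_nonneg (N : ℝ)]
    have h1 := mul_le_mul_of_nonneg_left hdeg hρ0
    have h2 : pdens P * (3 * (N : ℝ) ^ 2) ≤ 1 * (3 * (N : ℝ) ^ 2) :=
      mul_le_mul_of_nonneg_right hρ1 (by positivity)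
    calc pdens P * #X * #Y * #Z - η * (N : ℝ) ^ 3
        = pdens P * (#X * #Y * #Z) - η * (N : ℝ) ^ 3 := by ring
      _ ≤ _ := by linarith

lemma Sat.comp {C κ : Type*} {P : κ → κ → κ → Prop} (g : C → κ) {H : ThreeGraph}
    (h : Sat (fun a b c => P (g a) (g b) (g c)) H) : Sat P H := by
  obtain ⟨ord, φ, hinj, hs⟩ := h
  exact ⟨ord, fun u v => g (φ u v), hinj, hs⟩

lemma Sat.of_sub {κ : Type*} {P : κ → κ → κ → Prop} {F H : ThreeGraph}
    (h : Sat P H) (hs : IsSubhypergraph F H) : Sat P F := by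
  obtain ⟨ord, φ, hinj, hP⟩ := h
  obtain ⟨f, hf, hfv, hfe⟩ := hs
  refine ⟨fun v => ord (f v), fun u v => φ (f u) (f v), fun u hu v hv e => ?_,
    fun u v w he huv hvw => hP _ _ _ ?_ huv hvw⟩
  · exact hf hu hv (hinj (hfv u hu) (hfv v hv) e)
  · have := hfe _ he
    simpa [image_insert] using this

/-- The 3-graphs that do not satisfy `P`; being free of this family means satisfying `P`. -/
def family {κ : Type*} (P : κ → κ → κ → Prop) : Set ThreeGraph := {F | ¬ Sat P F}

lemma free_iff {κ : Type*} (P : κ → κ → κ → Prop) (H : ThreeGraph) :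
    (∀ F ∈ family P, ¬ IsSubhypergraph F H) ↔ Sat P H := by
  constructor
  · intro h
    by_contra hH
    refine h H hH ⟨id, Set.injOn_id _, fun v hv => hv, fun e he => ?_⟩
    rwa [image_id]
  · exact fun h F hF hs => hF (h.of_sub hs)

/-- The uniform Turán density of `family P` is sandwiched between the value of the palette
polynomial at a point with rational coordinates and its maximum. -/
lemma piVVV_bounds {κ : Type*} [Fintype κ] (P : κ → κ → κ → Prop) {Λ : ℝ}
    (hΛ : ∀ x : κ → ℝ, (∀ a, 0 ≤ x a) → ∑ a, x a = 1 →
      ∑ a, ∑ b, ∑ c, ind (P a b c) * (x a * x b * x c) ≤ Λ)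
    (w : κ → ℕ) {M : ℕ} (hM : ∑ a, w a = M + 1) :
    (∑ a, ∑ b, ∑ c, ind (P a b c) * ((w a : ℝ) * w b * w c)) / ((M : ℝ) + 1) ^ 3 ≤
      piVVV (family P) ∧ piVVV (family P) ≤ Λ := by
  have hcard : Fintype.card (Σ a : κ, Fin (w a)) = M + 1 := by simp [hM]
  let E : (Σ a : κ, Fin (w a)) ≃ Fin (M + 1) := Fintype.equivFinOfCardEq hcard
  let g : Fin (M + 1) → κ := fun i => (E.symm i).1
  have hg : ∀ F : κ → ℝ, ∑ i, F (g i) = ∑ a, w a * F a := fun F => by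
    rw [Equiv.sum_comp E.symm (fun s => F s.1), Fintype.sum_sigma]
    simp
  set P' : Fin (M + 1) → Fin (M + 1) → Fin (M + 1) → Prop := fun a b c => P (g a) (g b) (g c)
    with hP'
  have hpd : pdens P' =
      (∑ a, ∑ b, ∑ c, ind (P a b c) * ((w a : ℝ) * w b * w c)) / ((M : ℝ) + 1) ^ 3 := by
    simp only [pdens, hP', Fintype.card_fin]
    push_cast
    congr 1
    have s1 : ∀ a b : κ, ∑ i, ind (P a b (g i)) = ∑ c, w c * ind (P a b c) :=
      fun a b => hg fun c => ind (P a b c)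
    have s2 : ∀ a : κ, ∑ i, ∑ c, w c * ind (P a (g i) c) =
        ∑ b, (w b : ℝ) * ∑ c, w c * ind (P a b c) :=
      fun a => hg fun b => ∑ c, w c * ind (P a b c)
    have s3 := hg fun a => ∑ b, (w b : ℝ) * ∑ c, w c * ind (P a b c)
    simp only [s1, s2]
    rw [s3]
    simp only [mul_sum]
    exact sum_congr rfl fun a _ => sum_congr rfl fun b _ => sum_congr rfl fun c _ => by ring
  have hmem : pdens P' ∈ {d : ℝ | 0 ≤ d ∧ d ≤ 1 ∧ ∀ η : ℝ, 0 < η → ∀ n : ℕ,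
      ∃ H : ThreeGraph, n ≤ H.verts.card ∧ (∀ F ∈ family P, ¬ IsSubhypergraph F H) ∧
        IsDenseVVV H d η} := by
    refine ⟨pdens_nonneg _, pdens_le_one _, fun η hη n => ?_⟩
    obtain ⟨H, h1, h2, h3⟩ := exists_dense P' hη n
    exact ⟨H, h1, (free_iff P H).mpr (Sat.comp g h2), h3⟩
  rw [← hpd]
  refine ⟨le_csSup ⟨1, fun d hd => hd.2.1⟩ hmem, csSup_le ⟨_, hmem⟩ fun d hd => ?_⟩
  refine dens_le_of_sat P hΛ fun η hη n => ?_
  obtain ⟨H, h1, h2, h3⟩ := hd.2.2 η hη n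
  exact ⟨H, h1, (free_iff P H).mp h2, h3⟩

/-! ### The chain palette -/

/-- The palette on `Option ι` in which `none` occurs exactly once in every triple, and the
remaining two colours `p, q` admit `c p q` of the three positions of `none`. -/
def pal {ι : Type*} (c : ι → ι → ℕ) : Option ι → Option ι → Option ι → Prop
  | none, some p, some q => 0 < c p q
  | some p, none, some q => 1 < c p q
  | some p, some q, none => 2 < c p q
  | _, _, _ => False

lemma pal_sum {ι : Type*} [Fintype ι] (c : ι → ι → ℕ) (hc : ∀ p q, c p q ≤ 3)
    (x : Option ι → ℝ) :
    ∑ a, ∑ b, ∑ e, ind (pal c a b e) * (x a * x b * x e) =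
      x none * ∑ p, ∑ q, c p q * (x (some p) * x (some q)) := by
  have h3 : ∀ p q, (c p q : ℝ) = ind (0 < c p q) + ind (1 < c p q) + ind (2 < c p q) := by
    intro p q
    have := hc p q
    generalize c p q = k at this
    interval_cases k <;> norm_num [ind]
  have hF : ind False = 0 := ind_not id
  simp only [Fintype.sum_option, pal, hF, zero_mul, sum_const_zero, add_zero, zero_add, h3, mul_sum]
  rw [← sum_add_distrib]
  refine sum_congr rfl fun p _ => ?_
  rw [← add_assoc, ← sum_add_distrib, ← sum_add_distrib]
  refine sum_congr rfl fun q _ => ?_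
  ring

section
variable {m : ℕ}

/-- The diagonal multiplicities: `1` on the bottom level, `2` on the top level, `0` between. -/
def diag (i : Fin (m + 1)) : ℕ :=
  (if i = 0 then 1 else 0) + (if i = Fin.last m then 2 else 0)

/-- An enumeration of the two-point levels, level by level. -/
def pos (p : Fin (m + 1) × Bool) : ℕ := 2 * p.1 + (if p.2 then 1 else 0)

lemma pos_injective : Function.Injective (pos (m := m)) := by
  rintro ⟨i, s⟩ ⟨j, t⟩ h
  simp only [pos] at h
  cases s <;> cases t <;> simp at h ⊢ <;> omega

/-- The multiplicities of the chain palette: pairs in consecutive levels get `3`, all other pairs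
of distinct colours get `2` in one order and `3` in the other. -/
noncomputable def mult (p q : Fin (m + 1) × Bool) : ℕ :=
  if p = q then diag p.1
  else if (p.1 : ℕ) + 1 = q.1 ∨ (q.1 : ℕ) + 1 = p.1 then 3
  else if pos p < pos q then 2 else 3

lemma diag_le (hm : 1 ≤ m) (i : Fin (m + 1)) : diag i ≤ 2 := by
  unfold diag
  split_ifs with h h'
  · have := congrArg Fin.val (h.symm.trans h')
    simp at this
    omega
  all_goals norm_num

lemma mult_le (hm : 1 ≤ m) (p q : Fin (m + 1) × Bool) : mult p q ≤ 3 := by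
  unfold mult
  have := diag_le hm p.1
  split_ifs <;> omega

lemma mult_symm (p q : Fin (m + 1) × Bool) : (mult p q : ℝ) + mult q p =
    5 + ind ((p.1 : ℕ) + 1 = q.1) + ind ((q.1 : ℕ) + 1 = p.1) +
      ind (p = q) * (2 * diag p.1 - 5) := by
  by_cases h : p = q
  · subst h
    simp [mult, ind]
    ring
  · have h' : q ≠ p := fun e => h e.symm
    rw [ind_not h]
    by_cases h1 : (p.1 : ℕ) + 1 = q.1
    · have h2 : ¬ ((q.1 : ℕ) + 1 = p.1) := by omega
      rw [ind_of h1, ind_not h2]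
      simp [mult, h, h', h1]
      norm_num
    · by_cases h2 : (q.1 : ℕ) + 1 = p.1
      · rw [ind_not h1, ind_of h2]
        simp [mult, h, h', h2]
        norm_num
      · rw [ind_not h1, ind_not h2]
        rcases lt_or_gt_of_ne (pos_injective.ne h) with h3 | h3
        · simp [mult, h, h', h1, h2, h3, h3.not_gt]
          norm_num
        · simp [mult, h, h', h1, h2, h3, h3.not_gt]
          norm_num

lemma sum_adj (X : Fin (m + 1) → ℝ) :
    ∑ i : Fin (m + 1), ∑ j : Fin (m + 1), ind ((i : ℕ) + 1 = (j : ℕ)) * (X i * X j) =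
      ∑ i : Fin m, X i.castSucc * X i.succ := by
  rw [Fin.sum_univ_castSucc]
  have h0 : ∑ j : Fin (m + 1), ind (((Fin.last m : Fin (m + 1)) : ℕ) + 1 = j) *
      (X (Fin.last m) * X j) = 0 :=
    sum_eq_zero fun j _ => by
      rw [ind_not, zero_mul]
      have := j.2
      simp only [Fin.val_last]
      omega
  rw [h0, add_zero]
  refine sum_congr rfl fun i _ => ?_
  rw [sum_eq_single i.succ]
  · rw [ind_of (by simp), one_mul]
  · intro j _ hj
    rw [ind_not, zero_mul]
    intro h
    exact hj (Fin.ext (by simpa using h.symm))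
  · simp

/-- The weight of a level. -/
def lev (x : Fin (m + 1) × Bool → ℝ) (i : Fin (m + 1)) : ℝ := x (i, false) + x (i, true)

/-- The imbalance of a level. -/
def imb (x : Fin (m + 1) × Bool → ℝ) (i : Fin (m + 1)) : ℝ := x (i, false) - x (i, true)

lemma sum_lev (x : Fin (m + 1) × Bool → ℝ) : ∑ i, lev x i = ∑ p, x p := by
  rw [Fintype.sum_prod_type]
  refine sum_congr rfl fun i _ => ?_
  rw [Fintype.sum_bool, lev, add_comm]

/-- Completing squares in the quadratic form of the chain palette. -/
lemma quad_eq (x : Fin (m + 1) × Bool → ℝ) :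
    ∑ p, ∑ q, mult p q * (x p * x q) = 5 / 2 * (∑ p, x p) ^ 2
      - 1 / 4 * ∑ i : Fin m, (lev x i.succ - 2 * lev x i.castSucc) ^ 2
      + 1 / 4 * lev x 0 ^ 2 - 1 / 4 * ∑ i, (5 - 2 * (diag i : ℝ)) * imb x i ^ 2 := by
  have h1 : ∑ p, ∑ q, (mult p q : ℝ) * (x p * x q) =
      ∑ p, ∑ q, ((mult p q : ℝ) + mult q p) * (x p * x q) / 2 := by
    have : ∑ p, ∑ q, (mult p q : ℝ) * (x p * x q) = ∑ p, ∑ q, (mult q p : ℝ) * (x p * x q) := by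
      rw [sum_comm]
      exact sum_congr rfl fun p _ => sum_congr rfl fun q _ => by ring
    have h2 : ∑ p, ∑ q, ((mult p q : ℝ) + mult q p) * (x p * x q) / 2 =
        ((∑ p, ∑ q, (mult p q : ℝ) * (x p * x q)) +
          ∑ p, ∑ q, (mult q p : ℝ) * (x p * x q)) / 2 := by
      rw [← sum_add_distrib, sum_div]
      refine sum_congr rfl fun p _ => ?_
      rw [← sum_add_distrib, sum_div]
      exact sum_congr rfl fun q _ => by ring
    rw [h2, ← this]
    ring
  have a1 : ∑ p, ∑ q, ind ((p.1 : ℕ) + 1 = q.1) * (x p * x q) =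
      ∑ i : Fin m, lev x i.castSucc * lev x i.succ := by
    rw [← sum_adj (lev x), Fintype.sum_prod_type]
    refine sum_congr rfl fun i _ => ?_
    simp only [Fintype.sum_prod_type, Fintype.sum_bool, ← sum_add_distrib]
    exact sum_congr rfl fun j _ => by unfold lev; ring
  have a2 : ∑ p, ∑ q, ind ((q.1 : ℕ) + 1 = p.1) * (x p * x q) =
      ∑ i : Fin m, lev x i.castSucc * lev x i.succ := by
    rw [← a1, sum_comm]
    exact sum_congr rfl fun p _ => sum_congr rfl fun q _ => by ring
  have a3 : ∑ p, ∑ q, ind (p = q) * (2 * (diag p.1 : ℝ) - 5) * (x p * x q) =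
      ∑ i, (2 * (diag i : ℝ) - 5) * ((lev x i ^ 2 + imb x i ^ 2) / 2) := by
    have : ∀ p : Fin (m + 1) × Bool, ∑ q, ind (p = q) * (2 * (diag p.1 : ℝ) - 5) * (x p * x q) =
        (2 * (diag p.1 : ℝ) - 5) * x p ^ 2 := fun p => by
      simp only [mul_assoc]
      rw [sum_ind_eq (fun q => (2 * (diag p.1 : ℝ) - 5) * (x p * x q)) p]
      ring
    simp only [this]
    rw [Fintype.sum_prod_type]
    refine sum_congr rfl fun i _ => ?_
    rw [Fintype.sum_bool]
    unfold lev imb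
    ring
  have a4 : ∑ p, ∑ q, x p * x q = (∑ p, x p) ^ 2 := by rw [sq, sum_mul_sum]
  have h2 : ∑ p, ∑ q, ((mult p q : ℝ) + mult q p) * (x p * x q) / 2 =
      (5 * (∑ p, x p) ^ 2 + (∑ i : Fin m, lev x i.castSucc * lev x i.succ) +
        (∑ i : Fin m, lev x i.castSucc * lev x i.succ) +
        ∑ i, (2 * (diag i : ℝ) - 5) * ((lev x i ^ 2 + imb x i ^ 2) / 2)) / 2 := by
    rw [← a4, ← a3]
    nth_rewrite 1 [← a1]
    rw [← a2, mul_sum, ← sum_add_distrib, ← sum_add_distrib, ← sum_add_distrib, sum_div]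
    refine sum_congr rfl fun p _ => ?_
    rw [mul_sum, ← sum_add_distrib, ← sum_add_distrib, ← sum_add_distrib, sum_div]
    refine sum_congr rfl fun q _ => ?_
    rw [mult_symm]
    ring
  have d1 : ∑ i, (diag i : ℝ) * lev x i ^ 2 = lev x 0 ^ 2 + 2 * lev x (Fin.last m) ^ 2 := by
    simp only [diag]
    push_cast
    simp only [add_mul, sum_add_distrib, ite_mul, one_mul, zero_mul]
    simp
  have d2 : ∑ i, (2 * (diag i : ℝ) - 5) * ((lev x i ^ 2 + imb x i ^ 2) / 2) =
      ∑ i, (diag i : ℝ) * lev x i ^ 2 - 5 / 2 * ∑ i, lev x i ^ 2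
        - 1 / 2 * ∑ i, (5 - 2 * (diag i : ℝ)) * imb x i ^ 2 := by
    rw [mul_sum, mul_sum, ← sum_sub_distrib, ← sum_sub_distrib]
    exact sum_congr rfl fun i _ => by ring
  have d3 : ∑ i : Fin m, (lev x i.succ - 2 * lev x i.castSucc) ^ 2 =
      ∑ i : Fin m, lev x i.succ ^ 2 - 4 * ∑ i : Fin m, lev x i.castSucc * lev x i.succ
        + 4 * ∑ i : Fin m, lev x i.castSucc ^ 2 := by
    rw [mul_sum, mul_sum, ← sum_sub_distrib, ← sum_add_distrib]
    exact sum_congr rfl fun i _ => by ring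
  have d4 := Fin.sum_univ_succ fun i => lev x i ^ 2
  have d5 := Fin.sum_univ_castSucc fun i => lev x i ^ 2
  rw [h1, h2, d2, d1, d3]
  linarith

/-- The quadratic form exceeds `5/2 (∑ x)²` only slightly: either the bottom level is light, or some
level is far from double the one below. -/
lemma quad_le (hm : 1 ≤ m) (x : Fin (m + 1) × Bool → ℝ) (hx : ∀ p, 0 ≤ x p)
    (hS : ∑ p, x p ≤ 1) :
    ∑ p, ∑ q, mult p q * (x p * x q) ≤
      5 / 2 * (∑ p, x p) ^ 2 + 1 / (4 * ((m : ℝ) + 1) ^ 2) := by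
  rw [quad_eq]
  have hD : 0 ≤ ∑ i, (5 - 2 * (diag i : ℝ)) * imb x i ^ 2 := sum_nonneg fun i _ => by
    have : (diag i : ℝ) ≤ 2 := by exact_mod_cast diag_le hm i
    have := sq_nonneg (imb x i)
    nlinarith
  have hQ : 0 ≤ ∑ i : Fin m, (lev x i.succ - 2 * lev x i.castSucc) ^ 2 :=
    sum_nonneg fun _ _ => sq_nonneg _
  have hl : ∀ i, 0 ≤ lev x i := fun i => add_nonneg (hx _) (hx _)
  have hm0 : (0 : ℝ) < m + 1 := by positivity
  have hpos : 0 ≤ 1 / (4 * ((m : ℝ) + 1) ^ 2) := by positivity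
  by_cases h : lev x 0 ≤ 1 / ((m : ℝ) + 1)
  · have h1 : lev x 0 ^ 2 ≤ (1 / ((m : ℝ) + 1)) ^ 2 := pow_le_pow_left₀ (hl 0) h 2
    have h2 : 1 / 4 * (1 / ((m : ℝ) + 1)) ^ 2 = 1 / (4 * ((m : ℝ) + 1) ^ 2) := by
      field_simp
    linarith
  · push Not at h
    have h3 : lev x 0 ^ 2 ≤ ∑ i : Fin m, (lev x i.succ - 2 * lev x i.castSucc) ^ 2 := by
      by_contra hlt
      push Not at hlt
      have hi : ∀ i : Fin m, 2 * lev x i.castSucc - lev x 0 ≤ lev x i.succ := by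
        intro i
        have h4 := (single_le_sum (fun i _ => sq_nonneg _) (mem_univ i)).trans hlt.le
        have h5 := (abs_le.mp (abs_le_of_sq_le_sq h4 (hl 0))).1
        linarith
      have hall : ∀ i, lev x 0 ≤ lev x i := by
        intro i
        induction i using Fin.induction with
        | zero => exact le_rfl
        | succ i ih => linarith [hi i]
      have h6 : ((m : ℝ) + 1) * lev x 0 ≤ ∑ i, lev x i := by
        have := card_nsmul_le_sum univ (lev x) (lev x 0) fun i _ => hall i
        simpa using this
      rw [sum_lev] at h6
      rw [div_lt_iff₀ hm0] at h
      linarith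
    linarith

/-- On the simplex the palette polynomial of the chain palette exceeds `10/27` only slightly. -/
lemma chain_upper (hm : 1 ≤ m) (x : Option (Fin (m + 1) × Bool) → ℝ) (hx : ∀ a, 0 ≤ x a)
    (h1 : ∑ a, x a = 1) :
    ∑ a, ∑ b, ∑ c, ind (pal mult a b c) * (x a * x b * x c) ≤
      10 / 27 + 1 / (4 * ((m : ℝ) + 1) ^ 2) := by
  rw [pal_sum _ (mult_le hm)]
  rw [Fintype.sum_option] at h1
  have hy := hx none
  have hS0 : 0 ≤ ∑ p, x (some p) := sum_nonneg fun p _ => hx _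
  have h := quad_le hm (fun p => x (some p)) (fun p => hx _) (by linarith)
  have hpos : 0 ≤ 1 / (4 * ((m : ℝ) + 1) ^ 2) := by positivity
  have h2 := mul_le_mul_of_nonneg_left h hy
  set S := ∑ p, x (some p)
  have hyS : x none = 1 - S := by linarith
  have key : x none * S ^ 2 ≤ 4 / 27 := by
    rw [hyS]
    nlinarith [mul_nonneg (sq_nonneg (3 * S - 2)) (by linarith : 0 ≤ 3 * S + 1)]
  have h3 : x none * (1 / (4 * ((m : ℝ) + 1) ^ 2)) ≤ 1 * (1 / (4 * ((m : ℝ) + 1) ^ 2)) :=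
    mul_le_mul_of_nonneg_right (by linarith) hpos
  linarith

/-- The near-optimal integer weights: each level is twice as heavy as the one below. -/
def chainWeight (m : ℕ) : Option (Fin (m + 1) × Bool) → ℕ
  | none => ∑ i : Fin (m + 1), 2 ^ (i : ℕ)
  | some p => 2 ^ (p.1 : ℕ)

lemma chain_lower (hm : 1 ≤ m) : ∃ M : ℕ, ∑ a, chainWeight m a = M + 1 ∧
    10 / 27 < (∑ a, ∑ b, ∑ c, ind (pal mult a b c) *
      ((chainWeight m a : ℝ) * chainWeight m b * chainWeight m c)) / ((M : ℝ) + 1) ^ 3 := by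
  set Q : ℕ := ∑ i : Fin (m + 1), 2 ^ (i : ℕ) with hQ
  have hQ0 : 0 < Q := sum_pos (fun i _ => by positivity) ⟨0, mem_univ _⟩
  have hsome : ∑ p : Fin (m + 1) × Bool, 2 ^ (p.1 : ℕ) = 2 * Q := by
    rw [Fintype.sum_prod_type, hQ, mul_sum]
    refine sum_congr rfl fun i _ => ?_
    simp
  have hsum : ∑ a, chainWeight m a = 3 * Q := by
    rw [Fintype.sum_option]
    simp only [chainWeight, hsome, ← hQ]
    ring
  refine ⟨3 * Q - 1, by omega, ?_⟩
  have hM : (((3 * Q - 1 : ℕ) : ℝ) + 1) = 3 * Q := by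
    have : 3 * Q - 1 + 1 = 3 * Q := by omega
    exact_mod_cast this
  have hQr : (0 : ℝ) < Q := by exact_mod_cast hQ0
  rw [hM, pal_sum _ (mult_le hm) (fun a => (chainWeight m a : ℝ)),
    quad_eq (fun p => (chainWeight m (some p) : ℝ))]
  have hl : ∀ i, lev (fun p => (chainWeight m (some p) : ℝ)) i = 2 * 2 ^ (i : ℕ) := fun i => by
    simp only [lev, chainWeight]; push_cast; ring
  have hi : ∀ i, imb (fun p => (chainWeight m (some p) : ℝ)) i = 0 := fun i => by
    simp only [imb, chainWeight, sub_self]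
  have hs : ∑ p : Fin (m + 1) × Bool, (chainWeight m (some p) : ℝ) = 2 * Q := by
    simp only [chainWeight]
    exact_mod_cast hsome
  have h0 : ∑ i : Fin m, (lev (fun p => (chainWeight m (some p) : ℝ)) i.succ -
      2 * lev (fun p => (chainWeight m (some p) : ℝ)) i.castSucc) ^ 2 = 0 :=
    sum_eq_zero fun i _ => by rw [hl, hl]; simp [pow_succ]; ring
  rw [h0, hs, hl]
  simp only [hi]
  have hn : (chainWeight m none : ℝ) = Q := rfl
  rw [hn, lt_div_iff₀ (by positivity)]
  simp
  nlinarith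

end

/-! ### Densities accumulating at 10/27 from above -/

lemma chain_bounds {m : ℕ} (hm : 1 ≤ m) :
    10 / 27 < piVVV (family (pal (mult (m := m)))) ∧
      piVVV (family (pal (mult (m := m)))) ≤ 10 / 27 + 1 / (4 * ((m : ℝ) + 1) ^ 2) := by
  obtain ⟨M, hM, hlow⟩ := chain_lower hm
  have h := piVVV_bounds (pal (mult (m := m))) (fun x hx h1 => chain_upper hm x hx h1)
    (chainWeight m) hM
  exact ⟨hlow.trans_le h.1, h.2⟩

/-- A sequence of reals that stays above `l` but comes arbitrarily close to it takes values that
form a strictly decreasing sequence. -/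
lemma exists_seq (g : ℕ → ℝ) (l : ℝ) (h1 : ∀ n, l < g n) (h2 : ∀ ε > 0, ∃ n, g n < l + ε) :
    ∃ f : ℕ → ℝ, StrictAnti f ∧ ∀ n, ∃ m, f n = g m := by
  have : ∀ n, ∃ k, g k < g n := fun n => by
    obtain ⟨k, hk⟩ := h2 (g n - l) (sub_pos.mpr (h1 n))
    exact ⟨k, by linarith⟩
  choose s hs using this
  refine ⟨fun n => g (s^[n] 0), strictAnti_nat_of_succ_lt fun n => ?_, fun n => ⟨_, rfl⟩⟩
  simp only [Function.iterate_succ_apply']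
  exact hs _

end UniformTuran

/-- The set of uniform Turán densities is not well-ordered: there is an
infinite strictly decreasing sequence of reals, each of the form π_▽(𝓕). -/
theorem piVVV_not_wellOrdered :
    ∃ f : ℕ → ℝ, StrictAnti f ∧ ∀ n : ℕ, ∃ 𝓕 : Set ThreeGraph, f n = piVVV 𝓕 := by
  obtain ⟨f, hf, hfg⟩ := UniformTuran.exists_seq
    (fun m => piVVV (UniformTuran.family (UniformTuran.pal (UniformTuran.mult (m := m + 1)))))
    (10 / 27) (fun m => (UniformTuran.chain_bounds (Nat.le_add_left 1 m)).1) fun ε hε => by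
      obtain ⟨n, hn⟩ := exists_nat_gt (1 / ε)
      refine ⟨n, (UniformTuran.chain_bounds (Nat.le_add_left 1 n)).2.trans_lt ?_⟩
      rw [div_lt_iff₀ hε] at hn
      have h1 : 1 / (4 * (((n + 1 : ℕ) : ℝ) + 1) ^ 2) < ε := by
        rw [div_lt_iff₀ (by positivity)]
        push_cast
        have : (n : ℝ) ≤ 4 * ((n : ℝ) + 1 + 1) ^ 2 := by nlinarith [Nat.cast_nonneg (α := ℝ) n]
        nlinarith
      linarith
  exact ⟨f, hf, fun n => (hfg n).elim fun m hm => ⟨_, hm⟩⟩
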